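/- Let d ≥ 2 and let Ω, ρ, h_{λ,ℓ} be as in the context (in particular ∂Ω has everywhere nonvanishing Gaussian curvature). Let K_{λ,ℓ} := F^{−1}[h_{λ,ℓ}∘ρ]. Then there is a constant C such that for all integers ℓ ≥ 0: ‖K_{λ,ℓ}‖_{L^∞(ℝ^d)} ≤ C · 2^{−ℓ(λ + (d+1)/2)}. -/

import Mathlib

open MeasureTheory Filter
open scoped ENNReal NNReal RealInnerProductSpace BigOperators Topology

noncomputable section

/-- `ℝ^d` as a Euclidean space. -/
abbrev Euc (d : ℕ) : Type := EuclideanSpace ℝ (Fin d)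

/-- The geometric setup: `Ω` is a bounded open convex subset of `ℝ^d` containing the origin,
`ρ` is its Minkowski functional, which is assumed to be smooth away from the origin and
positive away from the origin. -/
structure IsMinkowskiGauge (d : ℕ) (Ω : Set (Euc d)) (ρ : Euc d → ℝ) : Prop where
  isOpen : IsOpen Ω
  convex : Convex ℝ Ω
  isBounded : Bornology.IsBounded Ω
  zero_mem : (0 : Euc d) ∈ Ω
  eq_gauge : ρ = gauge Ω
  smooth : ContDiffOn ℝ (⊤ : ℕ∞) ρ {(0 : Euc d)}ᶜ
  pos : ∀ ξ : Euc d, ξ ≠ 0 → 0 < ρ ξ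

/-- Everywhere nonvanishing Gaussian curvature of `∂Ω = {ρ = 1}`: for every `ξ ≠ 0`
the Hessian of `ρ` at `ξ` has rank `d - 1`. -/
def HasNonvanishingCurvature (d : ℕ) (ρ : Euc d → ℝ) : Prop :=
  ∀ ξ : Euc d, ξ ≠ 0 →
    LinearMap.rank ((fderiv ℝ (fderiv ℝ ρ) ξ : Euc d →L[ℝ] (Euc d →L[ℝ] ℝ)) :
      Euc d →ₗ[ℝ] (Euc d →L[ℝ] ℝ)) = (d - 1 : ℕ)

/-- The Fourier transform `f̂(ξ) = ∫ f(y) e^{−i⟨y,ξ⟩} dy` on `ℝ^d`. -/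
def FTd {d : ℕ} (f : Euc d → ℂ) (ξ : Euc d) : ℂ :=
  ∫ y : Euc d, f y * Complex.exp (-(Complex.I * (⟪y, ξ⟫ : ℂ)))

/-- The Riesz mean `R^λ_{a,t} f(x) = (2π)^{-d} ∫ (1 - ρ(ξ)^a/t^a)_+^λ f̂(ξ) e^{i⟨x,ξ⟩} dξ`. -/
def RieszMean {d : ℕ} (ρ : Euc d → ℝ) (a lam t : ℝ) (f : Euc d → ℂ) (x : Euc d) : ℂ :=
  (((2 * Real.pi) ^ d)⁻¹ : ℝ) •
    ∫ ξ : Euc d, ((max (1 - ρ ξ ^ a / t ^ a) 0) ^ lam : ℝ) •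
      (FTd f ξ * Complex.exp (Complex.I * (⟪x, ξ⟫ : ℂ)))

/-- The critical index `λ(p) = d(1/p - 1/2) - 1/2`. -/
def criticalIndex (d : ℕ) (p : ℝ) : ℝ := (d : ℝ) * (1 / p - 1 / 2) - 1 / 2

/-- One-dimensional Fourier transform `φ̂(ϱ) = ∫ φ(s) e^{-isϱ} ds`. -/
def FT1 (φ : ℝ → ℂ) (ϱ : ℝ) : ℂ :=
  ∫ s : ℝ, φ s * Complex.exp (-(Complex.I * (s : ℂ) * (ϱ : ℂ)))

/-- One-dimensional Fourier transform of a real-valued function. -/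
def FT1R (Φ : ℝ → ℝ) : ℝ → ℂ := FT1 (fun s => (Φ s : ℂ))

/-- The pieces `h_{λ,ℓ}` of the decomposition of the Riesz multiplier. -/
def hfun (χ Φ Ψ : ℝ → ℝ) (lam : ℝ) : ℕ → ℝ → ℂ
  | 0 => fun ϱ => ((2 * Real.pi)⁻¹ * χ ϱ : ℝ) •
      ∫ u : ℝ, ((max (1 - u) 0) ^ lam : ℝ) • FT1R Φ (ϱ - u)
  | (ℓ + 1) => fun ϱ => ((2 * Real.pi)⁻¹ * χ ϱ : ℝ) •
      ∫ u : ℝ, ((max (1 - u) 0) ^ lam : ℝ) •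
        (((2 : ℝ) ^ ℓ) • FT1R Ψ ((2 : ℝ) ^ ℓ * (ϱ - u)))

/-- The data entering the construction of `h_{λ,ℓ}`: a cutoff `χ ∈ C_c^∞((1/2,2))`, an even
`Φ = Φ∘ ∈ C_c^∞(ℝ)` with `Φ∘ = 1` on `[-1/2,1/2]`, `supp Φ∘ ⊆ [-1,1]`, satisfying the moment
cancellation conditions, and `Ψ(x) = Φ∘(x/2) - Φ∘(x)`. -/
structure HData (lam : ℝ) (N0 : ℕ) (χ Φ Ψ : ℝ → ℝ) : Prop where
  hχsm : ContDiff ℝ (⊤ : ℕ∞) χ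
  hχsupp : Function.support χ ⊆ Set.Ioo (1/2 : ℝ) 2
  hΦsm : ContDiff ℝ (⊤ : ℕ∞) Φ
  hΦeven : ∀ s, Φ (-s) = Φ s
  hΦone : ∀ s : ℝ, |s| ≤ 1/2 → Φ s = 1
  hΦzero : ∀ s : ℝ, 1 ≤ |s| → Φ s = 0
  hΦcanc : ∀ j : ℕ, j ≤ N0 → (j : ℝ) ≠ lam →
    (∫ ϱ in Set.Ioi (0 : ℝ), ((ϱ ^ lam : ℝ) : ℂ) * iteratedDeriv j (FT1R Φ) ϱ) = 0
  hΨ : Ψ = fun x => Φ (x / 2) - Φ x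

/-- Inverse Fourier transform on `ℝ^d`. -/
def invFTd {d : ℕ} (m : Euc d → ℂ) (x : Euc d) : ℂ :=
  (((2 * Real.pi) ^ d)⁻¹ : ℝ) •
    ∫ ξ : Euc d, m ξ * Complex.exp (Complex.I * (⟪x, ξ⟫ : ℂ))

/-- The Fourier multiplier operator `m(D) f = (𝓕⁻¹ m) * f`. -/
def mulOp {d : ℕ} (m : Euc d → ℂ) (f : Euc d → ℂ) (x : Euc d) : ℂ :=
  ∫ y : Euc d, invFTd m (x - y) * f y

/-- The Hardy–Littlewood maximal function. -/
def HLMaximal {d : ℕ} (w : Euc d → ℝ) (x : Euc d) : ℝ≥0∞ :=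
  ⨆ r : {r : ℝ // 0 < r},
    (volume (Metric.ball x r.1))⁻¹ * ∫⁻ y in Metric.ball x r.1, ENNReal.ofReal (w y)

/-- `w` is an `A₁` weight. -/
structure IsA1Weight {d : ℕ} (w : Euc d → ℝ) : Prop where
  nonneg : ∀ x, 0 ≤ w x
  locInt : LocallyIntegrable w volume
  ne_zero : ¬ (w =ᵐ[(volume : Measure (Euc d))] (0 : Euc d → ℝ))
  maximal_le : ∃ C : ℝ, ∀ᵐ x ∂(volume : Measure (Euc d)),
    HLMaximal w x ≤ ENNReal.ofReal (C * w x)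

/-- `w` satisfies a reverse Hölder inequality with exponent `σ`. -/
def IsRH {d : ℕ} (σ : ℝ) (w : Euc d → ℝ) : Prop :=
  ∃ C : ℝ, ∀ (x : Euc d) (r : ℝ), 0 < r →
    ((volume (Metric.ball x r))⁻¹ *
        ∫⁻ y in Metric.ball x r, ENNReal.ofReal (w y) ^ σ) ^ (1 / σ) ≤
      ENNReal.ofReal C *
        ((volume (Metric.ball x r))⁻¹ * ∫⁻ y in Metric.ball x r, ENNReal.ofReal (w y))

/-- The weighted `L^p(w)` (quasi-)norm. -/
def wLpNorm {d : ℕ} (p : ℝ) (w : Euc d → ℝ) (g : Euc d → ℂ) : ℝ≥0∞ :=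
  (∫⁻ x, (‖g x‖₊ : ℝ≥0∞) ^ p * ENNReal.ofReal (w x)) ^ (1 / p)

/-- The weighted weak `L^{p,∞}(w)` (quasi-)norm. -/
def wWeakNorm {d : ℕ} (p : ℝ) (w : Euc d → ℝ) (g : Euc d → ℂ) : ℝ≥0∞ :=
  ⨆ α : {α : ℝ // 0 < α},
    ENNReal.ofReal α.1 *
      (∫⁻ x in {x : Euc d | α.1 < ‖g x‖}, ENNReal.ofReal (w x)) ^ (1 / p)

/-- A (half-open, axes-parallel) cube `x + [0,s)^d` in `ℝ^d`. -/
def IsCube {d : ℕ} (Q : Set (Euc d)) : Prop :=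
  ∃ (x : Euc d) (s : ℝ), 0 < s ∧ Q = {y : Euc d | ∀ i, y i ∈ Set.Ico (x i) (x i + s)}

/-- The average `⟨f⟩_{Q,p} = (|Q|⁻¹ ∫_Q |f|^p)^{1/p}`. -/
def cubeAvg {d : ℕ} (p : ℝ) (Q : Set (Euc d)) (f : Euc d → ℂ) : ℝ≥0∞ :=
  ((volume Q)⁻¹ * ∫⁻ x in Q, (‖f x‖₊ : ℝ≥0∞) ^ p) ^ (1 / p)

/-- A `γ`-sparse (finite) family of cubes. -/
def IsSparseFamily {d : ℕ} (γ : ℝ) (𝔖 : Finset (Set (Euc d))) : Prop :=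
  (∀ Q ∈ 𝔖, IsCube Q) ∧
  ∃ E : Set (Euc d) → Set (Euc d),
    (∀ Q ∈ 𝔖, MeasurableSet (E Q) ∧ E Q ⊆ Q ∧
      ENNReal.ofReal γ * volume Q ≤ volume (E Q)) ∧
    (𝔖 : Set (Set (Euc d))).Pairwise fun Q Q' => Disjoint (E Q) (E Q')

/-- The maximal sparse form `Λ*_{p,q}(f₁,f₂)` (supremum over `1/2`-sparse families). -/
def sparseFormMax {d : ℕ} (p q : ℝ) (f₁ f₂ : Euc d → ℂ) : ℝ≥0∞ :=
  ⨆ 𝔖 : {𝔖 : Finset (Set (Euc d)) // IsSparseFamily (1/2) 𝔖},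
    ∑ Q ∈ 𝔖.1, volume Q * cubeAvg p Q f₁ * cubeAvg q Q f₂

/-- The sparse bound `T ∈ Sp(p,q)`. -/
def SparseBound {d : ℕ} (p q : ℝ) (T : (Euc d → ℂ) → Euc d → ℂ) : Prop :=
  ∃ C : ℝ, ∀ f₁ f₂ : Euc d → ℂ,
    ContDiff ℝ (⊤ : ℕ∞) f₁ → HasCompactSupport f₁ →
    ContDiff ℝ (⊤ : ℕ∞) f₂ → HasCompactSupport f₂ →
    ENNReal.ofReal ‖∫ x, T f₁ x * f₂ x‖ ≤ ENNReal.ofReal C * sparseFormMax p q f₁ f₂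

/-- The exponent `r_*(p, p∘, r∘)`. -/
def rStar (d : ℕ) (p p0 r0 : ℝ) : ℝ :=
  if p ≤ 2 * ((d : ℝ) + 1) / ((d : ℝ) + 3) then
    (((d : ℝ) + 1) / ((d : ℝ) - 1) * (1 - 1 / p))⁻¹
  else
    ((1 / r0 * (((d : ℝ) + 3) / (2 * ((d : ℝ) + 1)) - 1 / p) +
        1 / 2 * (1 / p - 1 / p0)) /
      (((d : ℝ) + 3) / (2 * ((d : ℝ) + 1)) - 1 / p0))⁻¹

/-- The exponent `q_*(p, p∘, r∘)`, the conjugate of `r_*(p, p∘, r∘)`. -/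
def qStar (d : ℕ) (p p0 r0 : ℝ) : ℝ := (1 - 1 / rStar d p p0 r0)⁻¹

/-- The trapezoid `∏_d(λ)` with corners `P₁, P₂, P₃, P₄`. -/
def trapez (d : ℕ) (lam : ℝ) : Set (ℝ × ℝ) :=
  convexHull ℝ
    {((2*lam + (d:ℝ) + 1)/(2*(d:ℝ)), ((d:ℝ) - 2*lam - 1)/(2*(d:ℝ))),
     ((2*lam + (d:ℝ) + 1)/(2*(d:ℝ)),
       ((d:ℝ) - 1)/(2*(d:ℝ)) + lam*((d:ℝ) + 1)/((d:ℝ)*((d:ℝ) - 1))),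
     (((d:ℝ) - 1)/(2*(d:ℝ)) + lam*((d:ℝ) + 1)/((d:ℝ)*((d:ℝ) - 1)),
       (2*lam + (d:ℝ) + 1)/(2*(d:ℝ))),
     (((d:ℝ) - 2*lam - 1)/(2*(d:ℝ)), (2*lam + (d:ℝ) + 1)/(2*(d:ℝ)))}

/-- A dyadic cube `2^k(m + [0,1)^d)`, recorded by its generation `k` and position `m`. -/
structure DyadicCube (d : ℕ) where
  k : ℤ
  m : Fin d → ℤ
deriving DecidableEq

/-- The subset of `ℝ^d` corresponding to a dyadic cube. -/
def DyadicCube.set {d : ℕ} (Q : DyadicCube d) : Set (Euc d) :=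
  {x : Euc d | ∀ i, x i ∈ Set.Ico ((2:ℝ) ^ Q.k * (Q.m i : ℝ)) ((2:ℝ) ^ Q.k * ((Q.m i : ℝ) + 1))}

/-- `μ(𝔔) = Σ_{Q ∈ 𝔔} |Q|`. -/
def dyadicMeasure {d : ℕ} (𝔔 : Finset (DyadicCube d)) : ℝ≥0∞ :=
  ∑ Q ∈ 𝔔, volume Q.set

/-- The class `𝒴_M` of normalized bump functions. -/
def MemYM (M : ℕ) (χ : ℝ → ℂ) : Prop :=
  ContDiff ℝ (M : ℕ∞) χ ∧ Function.support χ ⊆ Set.Ioo (1/2 : ℝ) 2 ∧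
    ∑ ν ∈ Finset.range (M + 1), (⨆ s : ℝ, ‖iteratedDeriv ν χ s‖) ≤ 1

/-- The function `Σ_{j ≥ 1} 2^{j(d+1)/2} m_j(D)[Σ_{Q ∈ 𝔇_j} f_Q]` appearing in `VBR(p,r)`,
where `m_j(ξ) = χ_j(2^j(1 - ρ(ξ)))`. -/
def vbrSum {d : ℕ} (ρ : Euc d → ℝ) (χ : ℕ → ℝ → ℂ) (𝔉 : Finset (DyadicCube d))
    (f : DyadicCube d → Euc d → ℂ) (x : Euc d) : ℂ :=
  Finset.sum ((𝔉.image (fun Q => Q.k)).filter (fun j => 1 ≤ j)) fun (j : ℤ) =>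
    ((2:ℝ) ^ ((j : ℝ) * ((d : ℝ) + 1) / 2)) •
      mulOp (fun ξ => χ j.toNat ((2:ℝ) ^ j * (1 - ρ ξ)))
        (fun y => ∑ Q ∈ 𝔉.filter (fun Q' => Q'.k = j), f Q y) x

/-- The statement `VBR(p,r)`. -/
def VBR (d : ℕ) (ρ : Euc d → ℝ) (p r : ℝ) : Prop :=
  ∃ (M : ℕ) (C : ℝ), 1 ≤ M ∧
    ∀ χ : ℕ → ℝ → ℂ, (∀ j : ℕ, 1 ≤ j → MemYM M (χ j)) →
    ∀ (𝔉 : Finset (DyadicCube d)) (f : DyadicCube d → Euc d → ℂ),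
      (∀ Q ∈ 𝔉, Function.support (f Q) ⊆ closure Q.set) →
      eLpNorm (vbrSum ρ χ 𝔉 f) (ENNReal.ofReal r) volume ≤
        ENNReal.ofReal C *
          (∑ Q ∈ 𝔉, volume Q.set * eLpNorm (f Q) (ENNReal.ofReal p) volume ^ r) ^ (1 / r)

/-- `Hyp(p∘, r∘)`: `VBR(p,r)` holds for all `p ∈ [2(d+1)/(d+3), p∘)`
and all `r ∈ [p, r_*(p,p∘,r∘))`. -/
def Hyp (d : ℕ) (ρ : Euc d → ℝ) (p0 r0 : ℝ) : Prop :=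
  ∀ p r : ℝ, 2 * ((d : ℝ) + 1) / ((d : ℝ) + 3) ≤ p → p < p0 →
    p ≤ r → r < rStar d p p0 r0 → VBR d ρ p r

/-- The operator `A_{λ,ℓ} = 2^{ℓ(λ + (d+1)/2)} h_{λ,ℓ}(ρ(D))`. -/
def Aop {d : ℕ} (ρ : Euc d → ℝ) (h : ℕ → ℝ → ℂ) (lam : ℝ) (ℓ : ℕ)
    (f : Euc d → ℂ) (x : Euc d) : ℂ :=
  ((2:ℝ) ^ ((ℓ : ℝ) * (lam + ((d : ℝ) + 1) / 2))) • mulOp (fun ξ => h ℓ (ρ ξ)) f x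

/-- `𝒜_{s,𝔔} F = Σ_{ℓ ≥ s} Σ_{Q ∈ 𝔔_{ℓ-s}} A_{λ,ℓ}[F_Q 1_Q]`. -/
def AopSum {d : ℕ} (ρ : Euc d → ℝ) (h : ℕ → ℝ → ℂ) (lam : ℝ) (s : ℕ)
    (𝔔 : Finset (DyadicCube d)) (F : DyadicCube d → Euc d → ℂ) (x : Euc d) : ℂ :=
  ∑ Q ∈ 𝔔, Aop ρ h lam (Q.k.toNat + s) (Q.set.indicator (F Q)) x

/-- `Ξ_{s,𝔔}[F,β] = Σ_{ℓ ≥ s} Σ_{Q ∈ 𝔔_{ℓ-s}} β(Q) A_{λ,ℓ}[F_Q 1_Q]`. -/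
def XiSum {d : ℕ} (ρ : Euc d → ℝ) (h : ℕ → ℝ → ℂ) (lam : ℝ) (s : ℕ)
    (𝔔 : Finset (DyadicCube d)) (F : DyadicCube d → Euc d → ℂ)
    (β : DyadicCube d → ℂ) (x : Euc d) : ℂ :=
  ∑ Q ∈ 𝔔, β Q * Aop ρ h lam (Q.k.toNat + s) (Q.set.indicator (F Q)) x

/-- `‖F‖_{ℓ^∞(L^p)} = sup_{Q ∈ 𝔔} ‖F_Q‖_{L^p}`. -/
def supLp {d : ℕ} (p : ℝ) (𝔔 : Finset (DyadicCube d))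
    (F : DyadicCube d → Euc d → ℂ) : ℝ≥0∞ :=
  ⨆ Q ∈ 𝔔, eLpNorm (F Q) (ENNReal.ofReal p) volume

/-- `‖β‖_{ℓ^{r,1}(μ)} = ∫_0^∞ μ({Q ∈ 𝔔 : |β(Q)| > α})^{1/r} dα`. -/
def lorentzNorm {d : ℕ} (r : ℝ) (𝔔 : Finset (DyadicCube d))
    (β : DyadicCube d → ℂ) : ℝ≥0∞ :=
  ∫⁻ α in Set.Ioi (0:ℝ),
    (∑ Q ∈ 𝔔, if α < ‖β Q‖ then volume Q.set else 0) ^ (1 / r)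

/-! For `ℓ ≥ 1` put `T = 2 ^ (ℓ - 1)`. Since `Ψ` vanishes near `0`, the convolution of `(1 - u)_+^λ`
with `T Ψ̂(T ·)` is `T ^ (-λ)` times the Fourier integral of `m(s) = c (is)^(-λ-1) Ψ(s)`, a smooth
function compactly supported away from `0`. Hence the kernel is `T ^ (-λ)` times an oscillatory
integral over `(ξ, s) ∈ ℝ^(d+1)` with phase `T s (1 - ρ(ξ)) + ⟨x, ξ⟩`. By Euler's identities and the
curvature hypothesis the Hessian of `s (1 - ρ(ξ))` is nondegenerate wherever `ξ ≠ 0` and `s ≠ 0`, so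
the integral is `O(T ^ (-(d+1)/2))` uniformly in the linear perturbation `⟨x, ξ⟩`: its square is an
integral over shifts `z` of oscillatory integrals whose phases do not feel the perturbation, up to
a constant, and have gradient of size `T ‖z‖`. -/

open scoped ContDiff

section UniformlySmooth

variable {ι E F G : Type*} [NormedAddCommGroup E] [NormedSpace ℝ E]
  [NormedAddCommGroup F] [NormedSpace ℝ F] [NormedAddCommGroup G] [NormedSpace ℝ G]
  {U : ι → Set E}

/-- A family of functions `f i`, smooth on open sets `U i`, whose derivatives of each order are
bounded on `U i` uniformly in `i`. -/
structure UniformlySmoothOn (U : ι → Set E) (f : ι → E → F) : Prop where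
  isOpen : ∀ i, IsOpen (U i)
  contDiffOn : ∀ i, ContDiffOn ℝ ∞ (f i) (U i)
  bounded : ∀ k : ℕ, ∃ C, ∀ i, ∀ p ∈ U i, ‖iteratedFDeriv ℝ k (f i) p‖ ≤ C

namespace UniformlySmoothOn

lemma exists_norm_le {f : ι → E → F} (hf : UniformlySmoothOn U f) :
    ∃ C, ∀ i, ∀ p ∈ U i, ‖f i p‖ ≤ C := by
  simpa using hf.bounded 0

lemma exists_one_le_forall_order_le {f : ι → E → F} (hf : UniformlySmoothOn U f) (n : ℕ) :
    ∃ C, 1 ≤ C ∧ ∀ k ≤ n, ∀ i, ∀ p ∈ U i, ‖iteratedFDeriv ℝ k (f i) p‖ ≤ C := by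
  choose C hC using hf.bounded
  obtain ⟨M, hM⟩ := ((Finset.range (n + 1)).image C).bddAbove
  refine ⟨max 1 M, le_max_left _ _, fun k hk i p hp => (hC k i p hp).trans ?_⟩
  exact (hM (Finset.mem_coe.2 (Finset.mem_image_of_mem C (Finset.mem_range_succ_iff.2 hk)))).trans
    (le_max_right _ _)

lemma smul {𝕜 : Type*} [NormedField 𝕜] [NormedAlgebra ℝ 𝕜] [NormedSpace 𝕜 F]
    [IsScalarTower ℝ 𝕜 F] {f : ι → E → 𝕜} {g : ι → E → F}
    (hf : UniformlySmoothOn U f) (hg : UniformlySmoothOn U g) :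
    UniformlySmoothOn U fun i p => f i p • g i p where
  isOpen := hf.isOpen
  contDiffOn i := (hf.contDiffOn i).smul (hg.contDiffOn i)
  bounded k := by
    obtain ⟨A, hA1, hA⟩ := hf.exists_one_le_forall_order_le k
    obtain ⟨B, -, hB⟩ := hg.exists_one_le_forall_order_le k
    refine ⟨∑ j ∈ Finset.range (k + 1), (k.choose j : ℝ) * A * B, fun i p hp => ?_⟩
    rw [← iteratedFDerivWithin_of_isOpen k (hf.isOpen i) hp]
    refine (norm_iteratedFDerivWithin_smul_le (hf.contDiffOn i) (hg.contDiffOn i)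
      (hf.isOpen i).uniqueDiffOn hp (mod_cast le_top)).trans (Finset.sum_le_sum fun j hj => ?_)
    rw [iteratedFDerivWithin_of_isOpen j (hf.isOpen i) hp,
      iteratedFDerivWithin_of_isOpen (k - j) (hf.isOpen i) hp]
    have hjA := hA j (Finset.mem_range_succ_iff.1 hj) i p hp
    have hjB := hB (k - j) (Nat.sub_le _ _) i p hp
    gcongr

lemma comp {V : ι → Set F} {g : ι → F → G} {f : ι → E → F} (hg : UniformlySmoothOn V g)
    (hf : UniformlySmoothOn U f) (hmaps : ∀ i, Set.MapsTo (f i) (U i) (V i)) :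
    UniformlySmoothOn U fun i => g i ∘ f i where
  isOpen := hf.isOpen
  contDiffOn i := (hg.contDiffOn i).comp (hf.contDiffOn i) (hmaps i)
  bounded k := by
    obtain ⟨A, -, hA⟩ := hg.exists_one_le_forall_order_le k
    obtain ⟨B, hB1, hB⟩ := hf.exists_one_le_forall_order_le k
    refine ⟨k.factorial * A * B ^ k, fun i p hp => ?_⟩
    rw [← iteratedFDerivWithin_of_isOpen k (hf.isOpen i) hp]
    refine norm_iteratedFDerivWithin_comp_le (hg.contDiffOn i) (hf.contDiffOn i)
      (mod_cast le_top) (hg.isOpen i).uniqueDiffOn (hf.isOpen i).uniqueDiffOn (hmaps i) hp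
      (fun j hj => ?_) (fun j hj1 hj => ?_)
    · rw [iteratedFDerivWithin_of_isOpen j (hg.isOpen i) (hmaps i hp)]
      exact hA j hj i _ (hmaps i hp)
    · rw [iteratedFDerivWithin_of_isOpen j (hf.isOpen i) hp]
      exact (hB j hj i p hp).trans (le_self_pow₀ hB1 (by omega))

lemma real_inv {c : ℝ} (hc : 0 < c) :
    UniformlySmoothOn (fun _ : ι => {y : ℝ | c < |y|}) fun _ => Inv.inv where
  isOpen _ := isOpen_lt continuous_const continuous_abs
  contDiffOn _ := contDiffOn_inv ℝ |>.mono fun _ hy => abs_pos.1 (hc.trans hy)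
  bounded k := by
    refine ⟨k.factorial * c ^ (-1 - k : ℤ), fun _ y hy => ?_⟩
    rw [norm_iteratedFDeriv_eq_norm_iteratedDeriv, iteratedDeriv_eq_iterate, iter_deriv_inv,
      norm_mul, norm_mul, norm_pow, norm_neg, norm_one, one_pow, one_mul, norm_zpow,
      RCLike.norm_natCast, Real.norm_eq_abs,
      show (-1 - k : ℤ) = -((k + 1 : ℕ) : ℤ) by push_cast; ring, zpow_neg, zpow_neg,
      zpow_natCast, zpow_natCast]
    have hcy : c ≤ |y| := le_of_lt hy
    gcongr

lemma inv {f : ι → E → ℝ} (hf : UniformlySmoothOn U f) {c : ℝ} (hc : 0 < c)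
    (hfc : ∀ i, ∀ p ∈ U i, c < |f i p|) : UniformlySmoothOn U fun i p => (f i p)⁻¹ :=
  (real_inv hc).comp hf hfc

lemma fderiv_apply {f : ι → E → F} (hf : UniformlySmoothOn U f) {e : ι → E}
    (he : ∀ i, ‖e i‖ ≤ 1) : UniformlySmoothOn U fun i p => fderiv ℝ (f i) p (e i) where
  isOpen := hf.isOpen
  contDiffOn i := ((hf.contDiffOn i).fderiv_of_isOpen (hf.isOpen i) (by simp)).clm_apply
    contDiffOn_const
  bounded k := by
    obtain ⟨C, hC⟩ := hf.bounded (k + 1)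
    refine ⟨C, fun i p hp => ?_⟩
    have hsmooth : ContDiffAt ℝ ∞ (fderiv ℝ (f i)) p :=
      ((hf.contDiffOn i).contDiffAt ((hf.isOpen i).mem_nhds hp)).fderiv_right (by simp)
    calc ‖iteratedFDeriv ℝ k (fun q => fderiv ℝ (f i) q (e i)) p‖
        ≤ ‖e i‖ * ‖iteratedFDeriv ℝ k (fderiv ℝ (f i)) p‖ :=
          norm_iteratedFDeriv_clm_apply_const hsmooth (mod_cast le_top)
      _ ≤ ‖iteratedFDeriv ℝ k (fderiv ℝ (f i)) p‖ :=
          mul_le_of_le_one_left (norm_nonneg _) (he i)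
      _ = ‖iteratedFDeriv ℝ (k + 1) (f i) p‖ := norm_iteratedFDeriv_fderiv
      _ ≤ C := hC i p hp

lemma of_translates {f : E → F} (hf : ContDiff ℝ ∞ f)
    (hfc : HasCompactSupport f) (hU : ∀ i, IsOpen (U i)) (w : ι → E) :
    UniformlySmoothOn U fun i p => f (p + w i) where
  isOpen := hU
  contDiffOn i := (hf.comp (contDiff_id.add contDiff_const)).contDiffOn
  bounded k := by
    obtain ⟨C, hC⟩ := (hfc.iteratedFDeriv (𝕜 := ℝ) k).exists_bound_of_continuous
      (hf.continuous_iteratedFDeriv (mod_cast le_top))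
    exact ⟨C, fun i p _ => by rw [iteratedFDeriv_comp_add_right]; exact hC _⟩

lemma of_differenceQuotients {f : E → F} (hf : ContDiff ℝ ∞ f)
    (hfc : HasCompactSupport f) (hU : ∀ i, IsOpen (U i)) (w : ι → E) :
    UniformlySmoothOn U fun i p => ‖w i‖⁻¹ • (f (p + w i) - f p) where
  isOpen := hU
  contDiffOn i := contDiff_const.smul ((hf.comp (contDiff_id.add contDiff_const)).sub hf)
    |>.contDiffOn
  bounded k := by
    obtain ⟨C, hC⟩ := ContDiff.lipschitzWith_of_hasCompactSupport
      (hfc.iteratedFDeriv (𝕜 := ℝ) k) (hf.iteratedFDeriv_right (m := 1) (mod_cast le_top))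
      one_ne_zero
    refine ⟨C, fun i p _ => ?_⟩
    have hk : (k : WithTop ℕ∞) ≤ (⊤ : ℕ∞) := mod_cast le_top
    have htrans : ContDiffAt ℝ k (fun q => f (q + w i)) p :=
      ((hf.of_le hk).comp (contDiff_id.add contDiff_const)).contDiffAt
    have hf' : ContDiffAt ℝ k f p := (hf.of_le hk).contDiffAt
    have hdiff : iteratedFDeriv ℝ k (fun q => ‖w i‖⁻¹ • (f (q + w i) - f q)) p =
        ‖w i‖⁻¹ • (iteratedFDeriv ℝ k f (p + w i) - iteratedFDeriv ℝ k f p) := by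
      rw [iteratedFDeriv_const_smul_apply' (htrans.sub hf'),
        fun_iteratedFDeriv_sub_apply htrans hf', iteratedFDeriv_comp_add_right]
    rw [hdiff, norm_smul, norm_inv, norm_norm]
    refine inv_mul_le_of_le_mul₀ (norm_nonneg _) C.2 ?_
    simpa [dist_eq_norm, mul_comm] using hC.dist_le_mul (p + w i) p

end UniformlySmoothOn

end UniformlySmooth

section OscillatoryIntegral

/-- The oscillatory integral `∫ e^{iφ} a dμ` with phase `φ` and amplitude `a`. -/
def oscIntegral {X : Type*} [MeasurableSpace X] (μ : Measure X) (φ : X → ℝ) (a : X → ℂ) : ℂ :=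
  ∫ p, Complex.exp (Complex.I * φ p) * a p ∂μ

lemma norm_exp_I_mul_ofReal (x : ℝ) : ‖Complex.exp (Complex.I * x)‖ = 1 := by
  rw [mul_comm, Complex.norm_exp_ofReal_mul_I]

section Measurable

variable {X : Type*} [MeasurableSpace X] {μ : Measure X}

lemma oscIntegral_const_smul (c : ℝ) (φ : X → ℝ) (a : X → ℂ) :
    oscIntegral μ φ (c • a) = c • oscIntegral μ φ a := by
  simp only [oscIntegral, Pi.smul_apply, mul_smul_comm, integral_smul]

lemma oscIntegral_phase_add_const (φ : X → ℝ) (a : X → ℂ) (c : ℝ) :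
    oscIntegral μ (fun p => φ p + c) a = Complex.exp (Complex.I * c) * oscIntegral μ φ a := by
  simp only [oscIntegral, Complex.ofReal_add, mul_add, Complex.exp_add, ← integral_const_mul]
  congr with p
  ring

end Measurable

section Topological

variable {X : Type*} [TopologicalSpace X] [MeasurableSpace X] {μ : Measure X}
  [IsFiniteMeasureOnCompacts μ] {φ : X → ℝ} {a b : X → ℂ}

lemma norm_oscIntegral_le_of_support_subset {K : Set X} (hK : IsCompact K) {C : ℝ}
    (hC : ∀ p, ‖a p‖ ≤ C) (haK : Function.support a ⊆ K) :
    ‖oscIntegral μ φ a‖ ≤ C * μ.real K := by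
  have hrestrict : oscIntegral μ φ a = ∫ p in K, Complex.exp (Complex.I * φ p) * a p ∂μ :=
    (setIntegral_eq_integral_of_forall_compl_eq_zero fun p hp => by
      rw [Function.notMem_support.1 (mt (@haK p) hp), mul_zero]).symm
  rw [hrestrict]
  refine norm_setIntegral_le_of_norm_le_const hK.measure_lt_top fun p _ => ?_
  simpa only [norm_mul, norm_exp_I_mul_ofReal, one_mul] using hC p

variable [OpensMeasurableSpace X]

lemma integrable_oscIntegrand (hφ : Continuous φ)
    (ha : Continuous a) (hac : HasCompactSupport a) :
    Integrable (fun p => Complex.exp (Complex.I * φ p) * a p) μ :=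
  Continuous.integrable_of_hasCompactSupport (by fun_prop) hac.mul_left

lemma oscIntegral_amplitude_add (hφ : Continuous φ)
    (ha : Continuous a) (hac : HasCompactSupport a) (hb : Continuous b)
    (hbc : HasCompactSupport b) :
    oscIntegral μ φ (a + b) = oscIntegral μ φ a + oscIntegral μ φ b := by
  simp only [oscIntegral, Pi.add_apply, mul_add]
  exact integral_add (integrable_oscIntegrand hφ ha hac) (integrable_oscIntegrand hφ hb hbc)

end Topological

section Derivative

variable {E F : Type*} [NormedAddCommGroup E] [NormedSpace ℝ E] [NormedAddCommGroup F]
  [NormedSpace ℝ F] {φ : E → ℝ} {a : E → ℂ}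

lemma contDiff_of_tsupport_subset {n : WithTop ℕ∞} {f : E → F} {U : Set E} (hU : IsOpen U)
    (hf : ContDiffOn ℝ n f U) (hfU : tsupport f ⊆ U) : ContDiff ℝ n f :=
  contMDiff_iff_contDiff.1 <| contMDiff_of_tsupport fun _ hp =>
    (hf.contDiffAt (hU.mem_nhds (hfU hp))).contMDiffAt

lemma fderiv_exp_I_mul_ofReal_apply {p : E} (hφ : DifferentiableAt ℝ φ p) (v : E) :
    fderiv ℝ (fun q => Complex.exp (Complex.I * φ q)) p v =
      Complex.I * fderiv ℝ φ p v * Complex.exp (Complex.I * φ p) := by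
  have hexp := ((Complex.ofRealCLM.hasFDerivAt.comp p hφ.hasFDerivAt).const_mul Complex.I).cexp
  refine (congrArg (· v) hexp.fderiv).trans ?_
  simp only [smul_apply, ContinuousLinearMap.comp_apply, Complex.ofRealCLM_apply,
    Function.comp_apply, smul_eq_mul]
  ring

variable [MeasurableSpace E] [BorelSpace E] [FiniteDimensional ℝ E] {μ : Measure E}
  [μ.IsAddHaarMeasure]

lemma oscIntegral_fderiv_smul (hφ : ContDiff ℝ 1 φ) (ha : ContDiff ℝ 1 a)
    (hac : HasCompactSupport a) (v : E) :
    oscIntegral μ φ (fun p => fderiv ℝ φ p v • a p) =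
      Complex.I * oscIntegral μ φ (fun p => fderiv ℝ a p v) := by
  have hφ' := fun p => fderiv_exp_I_mul_ofReal_apply (hφ.differentiable one_ne_zero p) v
  have hexp : ContDiff ℝ 1 fun p => Complex.exp (Complex.I * φ p) :=
    (contDiff_const.mul (Complex.ofRealCLM.contDiff.comp hφ)).cexp
  have hderiv (f : E → ℂ) (hf : ContDiff ℝ 1 f) : Continuous fun p => fderiv ℝ f p v :=
    (hf.continuous_fderiv one_ne_zero).clm_apply continuous_const
  have hibp := integral_mul_fderiv_eq_neg_fderiv_mul_of_integrable (μ := μ) (v := v)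
    (((hderiv _ hexp).mul ha.continuous).integrable_of_hasCompactSupport hac.mul_left)
    ((hexp.continuous.mul (hderiv a ha)).integrable_of_hasCompactSupport
      (hac.fderiv_apply ℝ v).mul_left)
    ((hexp.continuous.mul ha.continuous).integrable_of_hasCompactSupport hac.mul_left)
    (fun p _ => hexp.differentiable one_ne_zero p) (fun p _ => ha.differentiable one_ne_zero p)
  simp only [oscIntegral, hibp, hφ', ← integral_const_mul, ← integral_neg]
  congr with p
  rw [Complex.real_smul]
  linear_combination (Complex.exp (Complex.I * φ p) * fderiv ℝ φ p v * a p) * Complex.I_sq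

section NonstationaryPhase

variable {ι : Type*} {U : ι → Set E} {K : Set E} {ψ : ι → E → ℝ} {b : ι → E → ℂ} {e : ι → E}
  {c : ℝ}

lemma exists_amplitude_integrated_by_parts (hψ : ∀ i, ContDiff ℝ ∞ (ψ i))
    (hψU : UniformlySmoothOn U ψ) (he : ∀ i, ‖e i‖ ≤ 1) (hc : 0 < c)
    (hgrad : ∀ i, ∀ p ∈ U i, c < |fderiv ℝ (ψ i) p (e i)|) (hK : IsCompact K)
    (hb : UniformlySmoothOn U b) (hbK : ∀ i, tsupport (b i) ⊆ K ∩ U i) :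
    ∃ b' : ι → E → ℂ, UniformlySmoothOn U b' ∧ (∀ i, tsupport (b' i) ⊆ K ∩ U i) ∧
      ∀ i (t : ℝ), t • oscIntegral μ (fun p => t * ψ i p) (b i) =
        Complex.I * oscIntegral μ (fun p => t * ψ i p) (b' i) := by
  set D : ι → E → ℝ := fun i p => fderiv ℝ (ψ i) p (e i)
  set g : ι → E → ℂ := fun i p => (D i p)⁻¹ • b i p with hg
  have hgU : UniformlySmoothOn U g := ((hψU.fderiv_apply he).inv hc hgrad).smul hb
  have hgb (i : ι) : tsupport (g i) ⊆ tsupport (b i) :=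
    closure_mono (Function.support_smul_subset_right (fun p => (D i p)⁻¹) (b i))
  have hDg (i : ι) (p : E) : D i p • g i p = b i p := by
    by_cases hp : p ∈ U i
    · exact smul_inv_smul₀ (abs_pos.1 (hc.trans (hgrad i p hp))) _
    · simp [hg, image_eq_zero_of_notMem_tsupport fun h => hp (hbK i h).2]
  have hgsmooth (i : ι) : ContDiff ℝ ∞ (g i) :=
    contDiff_of_tsupport_subset (hgU.isOpen i) (hgU.contDiffOn i)
      ((hgb i).trans ((hbK i).trans Set.inter_subset_right))
  have hgc (i : ι) : HasCompactSupport (g i) :=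
    hK.of_isClosed_subset (isClosed_tsupport _)
      ((hgb i).trans ((hbK i).trans Set.inter_subset_left))
  refine ⟨fun i p => fderiv ℝ (g i) p (e i), hgU.fderiv_apply he, fun i => ?_, fun i t => ?_⟩
  · exact ((tsupport_fderiv_apply_subset ℝ (e i)).trans (hgb i)).trans (hbK i)
  · rw [← oscIntegral_fderiv_smul (contDiff_const.mul ((hψ i).of_le (by simp)))
      ((hgsmooth i).of_le (by simp)) (hgc i), ← oscIntegral_const_smul]
    congr with p
    rw [fderiv_const_mul ((hψ i).differentiable (by simp) p), Pi.smul_apply, ← hDg i p,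
      smul_apply, smul_assoc]

/-- Nonstationary phase: each integration by parts along `e i` gains a factor `t⁻¹`. -/
theorem exists_norm_oscIntegral_mul_pow_le (hψ : ∀ i, ContDiff ℝ ∞ (ψ i))
    (hψU : UniformlySmoothOn U ψ) (he : ∀ i, ‖e i‖ ≤ 1) (hc : 0 < c)
    (hgrad : ∀ i, ∀ p ∈ U i, c < |fderiv ℝ (ψ i) p (e i)|) (hK : IsCompact K) (N : ℕ)
    (hb : UniformlySmoothOn U b) (hbK : ∀ i, tsupport (b i) ⊆ K ∩ U i) :
    ∃ C, ∀ i (t : ℝ), 0 ≤ t → ‖oscIntegral μ (fun p => t * ψ i p) (b i)‖ * t ^ N ≤ C := by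
  induction N generalizing b with
  | zero =>
    obtain ⟨C, hC⟩ := hb.exists_norm_le
    refine ⟨max C 0 * μ.real K, fun i t _ => ?_⟩
    rw [pow_zero, mul_one]
    refine norm_oscIntegral_le_of_support_subset hK (fun p => ?_)
      (fun p hp => (hbK i (subset_tsupport _ hp)).1)
    by_cases hp : p ∈ U i
    · exact (hC i p hp).trans (le_max_left _ _)
    · simp [image_eq_zero_of_notMem_tsupport fun h => hp (hbK i h).2]
  | succ N ih =>
    obtain ⟨b', hb', hb'K, hbb'⟩ :=
      exists_amplitude_integrated_by_parts (μ := μ) hψ hψU he hc hgrad hK hb hbK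
    obtain ⟨C, hC⟩ := ih hb' hb'K
    refine ⟨C, fun i t ht => (Eq.le ?_).trans (hC i t ht)⟩
    have hnorm := congrArg norm (hbb' i t)
    rw [norm_smul, norm_mul, Complex.norm_I, one_mul, Real.norm_of_nonneg ht] at hnorm
    rw [← hnorm]
    ring

end NonstationaryPhase

end Derivative

end OscillatoryIntegral

section NondegeneratePhase

section MultDeriv

/-- The multiplicative derivative `p ↦ a (p + z) * conj (a p)` of `a` in the direction `z`; its
integral is the autocorrelation of `a` at `z`. -/
def multDeriv {G : Type*} [Add G] (a : G → ℂ) (z p : G) : ℂ := a (p + z) * (starRingEnd ℂ) (a p)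

variable {G : Type*} [TopologicalSpace G] [Add G] [ContinuousAdd G]

lemma tsupport_multDeriv_subset (a : G → ℂ) (z : G) :
    tsupport (multDeriv a z) ⊆ {p | p ∈ tsupport a ∧ p + z ∈ tsupport a} := by
  refine closure_minimal (fun p hp => ?_) ((isClosed_tsupport a).inter
    ((isClosed_tsupport a).preimage (continuous_add_const z)))
  rw [Function.mem_support, multDeriv, mul_ne_zero_iff, map_ne_zero] at hp
  exact ⟨subset_tsupport a hp.2, subset_tsupport a hp.1⟩

lemma exists_norm_oscIntegral_multDeriv_le [MeasurableSpace G] {μ : Measure G}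
    [IsFiniteMeasureOnCompacts μ] {a : G → ℂ} (ha : Continuous a)
    (hac : HasCompactSupport a) :
    ∃ C, ∀ (z : G) (φ : G → ℝ), ‖oscIntegral μ φ (multDeriv a z)‖ ≤ C := by
  obtain ⟨M, hM⟩ := hac.exists_bound_of_continuous ha
  refine ⟨M * M * μ.real (tsupport a), fun z φ =>
    norm_oscIntegral_le_of_support_subset hac (fun p => ?_)
      fun p hp => (tsupport_multDeriv_subset a z (subset_tsupport _ hp)).1⟩
  rw [multDeriv, norm_mul, RCLike.norm_conj]
  exact mul_le_mul (hM _) (hM _) (norm_nonneg _) ((norm_nonneg _).trans (hM p))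

end MultDeriv

variable {E : Type*} [NormedAddCommGroup E] [NormedSpace ℝ E]

lemma exists_direction_le_abs_apply [FiniteDimensional ℝ E] {A : E →L[ℝ] (E →L[ℝ] ℝ)}
    (hA : Function.Injective A) :
    ∃ c > 0, ∃ v : E → E, (∀ z, ‖v z‖ ≤ 1) ∧ ∀ z, c * ‖z‖ ≤ |A z (v z)| := by
  obtain ⟨κ, hκ, hanti⟩ := LinearMap.exists_antilipschitzWith
    (A : E →ₗ[ℝ] (E →L[ℝ] ℝ)) (LinearMap.ker_eq_bot.2 hA)
  have : (0 : ℝ) < κ := hκ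
  have hlower (z : E) : ‖z‖ ≤ κ * ‖A z‖ := by simpa using hanti.le_mul_dist z 0
  have hdir (z : E) : ∃ v : E, ‖v‖ ≤ 1 ∧ (2 * κ : ℝ)⁻¹ * ‖z‖ ≤ |A z v| := by
    rcases eq_or_ne z 0 with rfl | hz
    · exact ⟨0, by simp, by simp⟩
    · have hlt : (2 * κ : ℝ)⁻¹ * ‖z‖ < ‖A z‖ := by
        rw [inv_mul_lt_iff₀ (by positivity)]
        linarith [hlower z, norm_pos_iff.2 hz]
      obtain ⟨v, hv, hzv⟩ := (A z).exists_lt_apply_of_lt_opNorm hlt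
      exact ⟨v, hv.le, hzv.le⟩
  choose v hv hzv using hdir
  exact ⟨(2 * κ : ℝ)⁻¹, by positivity, v, hv, hzv⟩

/-- A family of directions witnessing that `f : E → E*` separates the points of `B` quantitatively:
moving from `p` to `p + z` changes the value of `f` on `v z` by at least `c ‖z‖`. For `f = dφ` this
is the lower bound needed for nonstationary phase applied to `φ (p + z) - φ p`. -/
structure SeparatesAlong (f : E → E →L[ℝ] ℝ) (B : Set E) (c : ℝ) (v : E → E) : Prop where
  norm_le_one : ∀ z, ‖v z‖ ≤ 1
  le_abs_sub_apply : ∀ z p, p ∈ B → p + z ∈ B → c * ‖z‖ ≤ |(f (p + z) - f p) (v z)|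

lemma exists_separatesAlong [FiniteDimensional ℝ E] {f : E → E →L[ℝ] ℝ}
    {A : E →L[ℝ] (E →L[ℝ] ℝ)} {p₀ : E} (hf : HasStrictFDerivAt f A p₀)
    (hA : Function.Injective A) :
    ∃ B, IsOpen B ∧ p₀ ∈ B ∧ ∃ c > 0, ∃ v : E → E, SeparatesAlong f B c v := by
  obtain ⟨c, hc, v, hv, hAv⟩ := exists_direction_le_abs_apply hA
  obtain ⟨s, hs, happrox⟩ := hf.approximates_deriv_on_nhds
    (c := ⟨c / 2, by positivity⟩) (Or.inr (NNReal.coe_pos.1 (half_pos hc)))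
  refine ⟨interior s, isOpen_interior, mem_interior_iff_mem_nhds.2 hs, c / 2, half_pos hc, v, hv,
    fun z p hp hpz => ?_⟩
  have herror : |(f (p + z) - f p - A z) (v z)| ≤ c / 2 * ‖z‖ := by
    have h := happrox (p + z) (interior_subset hpz) p (interior_subset hp)
    rw [add_sub_cancel_left] at h
    exact ((f (p + z) - f p - A z).le_of_opNorm_le_of_le h (hv z)).trans_eq (mul_one _)
  have htriangle : |A z (v z)| ≤
      |(f (p + z) - f p) (v z)| + |(f (p + z) - f p - A z) (v z)| := by
    rw [sub_apply (f (p + z) - f p) (A z)]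
    simpa using abs_sub ((f (p + z) - f p) (v z)) ((f (p + z) - f p) (v z) - A z (v z))
  linarith [hAv z]

lemma uniformlySmoothOn_multDeriv {ι : Type*} {U : ι → Set E} (hU : ∀ i, IsOpen (U i))
    {a : E → ℂ} (ha : ContDiff ℝ ∞ a) (hac : HasCompactSupport a) (w : ι → E) :
    UniformlySmoothOn U fun i => multDeriv a (w i) := by
  have hconj : ContDiff ℝ ∞ fun p => (starRingEnd ℂ) (a p) := Complex.conjCLE.contDiff.comp ha
  have hconjc : HasCompactSupport fun p => (starRingEnd ℂ) (a p) := hac.comp_left (map_zero _)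
  have htranslates := UniformlySmoothOn.of_translates ha hac hU w
  have hfixed := UniformlySmoothOn.of_translates hconj hconjc hU 0
  simp only [Pi.zero_apply, add_zero] at hfixed
  exact htranslates.smul hfixed

lemma fderiv_const_smul_sub_comp_add_apply {φ : E → ℝ} (hφ : Differentiable ℝ φ) (r : ℝ)
    (z p v : E) :
    fderiv ℝ (fun q => r • (φ (q + z) - φ q)) p v =
      r * (fderiv ℝ φ (p + z) - fderiv ℝ φ p) v := by
  have hshift : DifferentiableAt ℝ (fun q => φ (q + z)) p := by fun_prop
  rw [fderiv_fun_const_smul (hshift.fun_sub (hφ p)), fderiv_fun_sub hshift (hφ p),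
    fderiv_comp_add_right]
  rfl

variable [MeasurableSpace E] [BorelSpace E] [FiniteDimensional ℝ E] {μ : Measure E}
  [μ.IsAddHaarMeasure]

lemma exists_norm_oscIntegral_multDeriv_mul_pow_le {φ : E → ℝ} (hφ : ContDiff ℝ ∞ φ)
    (hφc : HasCompactSupport φ) {B : Set E} (hB : IsOpen B) {c : ℝ} (hc : 0 < c) {v : E → E}
    (hsep : SeparatesAlong (fderiv ℝ φ) B c v) {a : E → ℂ} (ha : ContDiff ℝ ∞ a)
    (hac : HasCompactSupport a) (haB : tsupport a ⊆ B) (N : ℕ) :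
    ∃ C, ∀ z ≠ 0, ∀ t : ℝ, 0 ≤ t →
      ‖oscIntegral μ (fun p => t * (φ (p + z) - φ p)) (multDeriv a z)‖ * (t * ‖z‖) ^ N ≤ C := by
  let U : {z : E // z ≠ 0} → Set E := fun z => {p | p ∈ B ∧ p + z ∈ B}
  have hU (z) : IsOpen (U z) := hB.inter (hB.preimage (continuous_add_const z.1))
  have hgrad (z : {z : E // z ≠ 0}) (p : E) (hp : p ∈ U z) :
      c / 2 < |fderiv ℝ (fun q => ‖z.1‖⁻¹ • (φ (q + z) - φ q)) p (v z)| := by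
    have hz : 0 < ‖z.1‖ := norm_pos_iff.2 z.2
    rw [fderiv_const_smul_sub_comp_add_apply (hφ.differentiable (by simp)), abs_mul,
      abs_of_pos (inv_pos.2 hz), lt_inv_mul_iff₀ hz]
    linarith [hsep.le_abs_sub_apply z p hp.1 hp.2, mul_pos hc hz]
  obtain ⟨C, hC⟩ := exists_norm_oscIntegral_mul_pow_le (μ := μ)
    (ψ := fun (z : {z : E // z ≠ 0}) p => ‖z.1‖⁻¹ • (φ (p + z) - φ p))
    (fun z => ((hφ.comp (contDiff_id.add contDiff_const)).sub hφ).const_smul ‖z.1‖⁻¹)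
    (UniformlySmoothOn.of_differenceQuotients hφ hφc hU (fun z => z.1))
    (fun z => hsep.norm_le_one z) (half_pos hc) hgrad hac N
    (uniformlySmoothOn_multDeriv hU ha hac fun z => z.1) fun z p hp => by
      have hp' := tsupport_multDeriv_subset a z.1 hp
      exact ⟨hp'.1, haB hp'.1, haB hp'.2⟩
  refine ⟨C, fun z hz t ht => ?_⟩
  have hphase : (fun p => t * (φ (p + z) - φ p)) =
      fun p => t * ‖z‖ * (‖z‖⁻¹ • (φ (p + z) - φ p)) := by
    ext p
    rw [smul_eq_mul, mul_assoc, mul_inv_cancel_left₀ (norm_ne_zero_iff.2 hz)]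
  rw [hphase]
  exact hC ⟨z, hz⟩ (t * ‖z‖) (by positivity)

lemma exists_norm_oscIntegral_multDeriv_mul_one_add_pow_le {φ : E → ℝ} (hφ : ContDiff ℝ ∞ φ)
    (hφc : HasCompactSupport φ) {B : Set E} (hB : IsOpen B) {c : ℝ} (hc : 0 < c) {v : E → E}
    (hsep : SeparatesAlong (fderiv ℝ φ) B c v) {a : E → ℂ} (ha : ContDiff ℝ ∞ a)
    (hac : HasCompactSupport a) (haB : tsupport a ⊆ B) (N : ℕ) :
    ∃ C, ∀ (z : E) (t : ℝ), 0 ≤ t →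
      ‖oscIntegral μ (fun p => t * (φ (p + z) - φ p)) (multDeriv a z)‖ * (1 + t * ‖z‖) ^ N
        ≤ C := by
  obtain ⟨C₀, hC₀⟩ := exists_norm_oscIntegral_multDeriv_le (μ := μ) ha.continuous hac
  obtain ⟨C₁, hC₁⟩ := exists_norm_oscIntegral_multDeriv_mul_pow_le (μ := μ) hφ hφc hB hc hsep
    ha hac haB N
  refine ⟨2 ^ (N - 1) * (C₀ + max C₀ C₁), fun z t ht => ?_⟩
  set J := ‖oscIntegral μ (fun p => t * (φ (p + z) - φ p)) (multDeriv a z)‖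
  have hJ₀ : J ≤ C₀ := hC₀ z _
  have hJ₁ : J * (t * ‖z‖) ^ N ≤ max C₀ C₁ := by
    rcases eq_or_ne z 0 with rfl | hz
    · exact (mul_le_of_le_one_right (norm_nonneg _)
        (pow_le_one₀ (by simp) (by simp))).trans (hJ₀.trans (le_max_left _ _))
    · exact (hC₁ z hz t ht).trans (le_max_right _ _)
  calc J * (1 + t * ‖z‖) ^ N
      ≤ J * (2 ^ (N - 1) * (1 ^ N + (t * ‖z‖) ^ N)) := by
        gcongr
        exact add_pow_le zero_le_one (by positivity) N
    _ = 2 ^ (N - 1) * (J + J * (t * ‖z‖) ^ N) := by ring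
    _ ≤ 2 ^ (N - 1) * (C₀ + max C₀ C₁) := by gcongr

lemma norm_integral_sq_eq {A : E → ℂ} (hA : Integrable A μ) :
    ‖∫ p, A p ∂μ‖ ^ 2 = ‖∫ z, ∫ p, multDeriv A z p ∂μ ∂μ‖ := by
  have hconj : Integrable (fun p => (starRingEnd ℂ) (A (-p))) μ :=
    Complex.conjCLE.toContinuousLinearMap.integrable_comp hA.comp_neg
  have hconv := integral_convolution (ContinuousLinearMap.mul ℝ ℂ) hconj hA
  have hinner (z : E) : convolution (fun p => (starRingEnd ℂ) (A (-p))) A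
      (ContinuousLinearMap.mul ℝ ℂ) μ z = ∫ p, multDeriv A z p ∂μ := by
    rw [convolution, ← integral_neg_eq_self]
    simp [multDeriv, mul_comm, add_comm]
  simp only [hinner] at hconv
  rw [hconv, integral_neg_eq_self (fun p => (starRingEnd ℂ) (A p)), integral_conj,
    ContinuousLinearMap.mul_apply', norm_mul, RCLike.norm_conj, sq]

/-- The `TT*` argument: for a nondegenerate phase `φ` the phases on the right are nonstationary
for `z ≠ 0`. -/
lemma norm_oscIntegral_sq_eq {φ : E → ℝ} (hφ : Continuous φ) {a : E → ℂ} (ha : Continuous a)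
    (hac : HasCompactSupport a) :
    ‖oscIntegral μ φ a‖ ^ 2 =
      ‖∫ z, oscIntegral μ (fun p => φ (p + z) - φ p) (multDeriv a z) ∂μ‖ := by
  rw [oscIntegral, norm_integral_sq_eq (integrable_oscIntegrand hφ ha hac)]
  congr with z
  refine integral_congr_ae (.of_forall fun p => ?_)
  have hphase : Complex.exp (Complex.I * (φ (p + z) - φ p : ℝ)) =
      Complex.exp (Complex.I * φ (p + z)) * Complex.exp (-(Complex.I * φ p)) := by
    rw [← Complex.exp_add]
    push_cast
    ring_nf
  simp only [multDeriv, map_mul, ← Complex.exp_conj, Complex.conj_I, Complex.conj_ofReal, neg_mul,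
    hphase]
  ring

end NondegeneratePhase

section OscillatoryDecay

variable {E : Type*} [NormedAddCommGroup E] [NormedSpace ℝ E] [MeasurableSpace E]
  {μ : Measure E} {φ ψ : E → ℝ} {a b : E → ℂ} {V W : Set E}

/-- Stationary phase decay: the oscillatory integral with phase `t φ + L` and amplitude `a` is
`O(t^{-dim E / 2})`, uniformly in the linear functional `L`. -/
def HasOscDecay (μ : Measure E) (φ : E → ℝ) (a : E → ℂ) : Prop :=
  ∃ C : ℝ, ∀ t > 0, ∀ L : E →L[ℝ] ℝ,
    ‖oscIntegral μ (fun p => t * φ p + L p) a‖ ≤ C * t ^ (-(Module.finrank ℝ E : ℝ) / 2)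

/-- Stationary phase decay holds for every smooth amplitude compactly supported in `V`. -/
def OscDecayOn (μ : Measure E) (φ : E → ℝ) (V : Set E) : Prop :=
  ∀ a : E → ℂ, ContDiff ℝ ∞ a → HasCompactSupport a → tsupport a ⊆ V → HasOscDecay μ φ a

lemma HasOscDecay.congr_phase (h : HasOscDecay μ φ a) (hφψ : Set.EqOn φ ψ (tsupport a)) :
    HasOscDecay μ ψ a := by
  obtain ⟨C, hC⟩ := h
  refine ⟨C, fun t ht L => (congrArg norm (integral_congr_ae (.of_forall fun p => ?_))).trans_le
    (hC t ht L)⟩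
  by_cases hp : p ∈ tsupport a
  · simp only [hφψ hp]
  · simp only [image_eq_zero_of_notMem_tsupport hp, mul_zero]

lemma oscDecayOn_empty : OscDecayOn μ φ ∅ := by
  intro a _ _ ha
  rw [Set.subset_empty_iff, tsupport_eq_empty_iff] at ha
  exact ⟨0, fun t _ L => by simp [ha, oscIntegral]⟩

lemma HasOscDecay.add [OpensMeasurableSpace E] [IsFiniteMeasureOnCompacts μ] (hφ : Continuous φ)
    (ha : Continuous a) (hac : HasCompactSupport a) (hb : Continuous b) (hbc : HasCompactSupport b)
    (hda : HasOscDecay μ φ a) (hdb : HasOscDecay μ φ b) : HasOscDecay μ φ (a + b) := by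
  obtain ⟨A, hA⟩ := hda
  obtain ⟨B, hB⟩ := hdb
  refine ⟨A + B, fun t ht L => ?_⟩
  rw [oscIntegral_amplitude_add (by fun_prop) ha hac hb hbc, add_mul]
  exact (norm_add_le _ _).trans (add_le_add (hA t ht L) (hB t ht L))

lemma exists_contDiff_eventually_eq_one {E : Type*} [NormedAddCommGroup E] [NormedSpace ℝ E]
    [FiniteDimensional ℝ E] {K V : Set E} (hK : IsClosed K) (hV : IsOpen V) (hKV : K ⊆ V) :
    ∃ η : E → ℝ, ContDiff ℝ ∞ η ∧ (∀ᶠ p in 𝓝ˢ K, η p = 1) ∧ tsupport η ⊆ V := by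
  obtain ⟨U, hU, hKU, hUV⟩ := normal_exists_closure_subset hK hV hKV
  obtain ⟨η, hη, hηU, -⟩ := exists_contMDiffMap_one_nhds_of_subset_interior (n := (⊤ : ℕ∞))
    (modelWithCornersSelf ℝ E) hK (hKU.trans hU.interior_eq.ge)
  refine ⟨η, contMDiff_iff_contDiff.1 η.contMDiff, hη, (closure_mono ?_).trans hUV⟩
  exact fun p hp => by_contra fun hpU => hp (hηU p hpU)

variable [BorelSpace E] [FiniteDimensional ℝ E]

lemma OscDecayOn.union [IsFiniteMeasureOnCompacts μ] (hφ : Continuous φ) (hV : IsOpen V)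
    (hW : IsOpen W) (hdV : OscDecayOn μ φ V) (hdW : OscDecayOn μ φ W) :
    OscDecayOn μ φ (V ∪ W) := by
  intro a ha hac haVW
  obtain ⟨η, hη, hη1, hηV⟩ := exists_contDiff_eventually_eq_one
    ((isClosed_tsupport a).sdiff hW) hV (Set.sdiff_subset_iff.2 (Set.union_comm V W ▸ haVW))
  set a₁ : E → ℂ := fun p => η p • a p
  set a₂ : E → ℂ := fun p => (1 - η p) • a p
  have ha₁ : ContDiff ℝ ∞ a₁ := hη.smul ha
  have ha₂ : ContDiff ℝ ∞ a₂ := (contDiff_const.sub hη).smul ha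
  have ha₁V : tsupport a₁ ⊆ V := (tsupport_smul_subset_left η a).trans hηV
  have ha₂W : tsupport a₂ ⊆ W := by
    intro p hp
    by_contra hpW
    have hpa : p ∈ tsupport a := tsupport_smul_subset_right (fun q => 1 - η q) a hp
    have hpK : p ∈ tsupport a \ W := ⟨hpa, hpW⟩
    refine notMem_tsupport_iff_eventuallyEq.2 ?_ hp
    filter_upwards [hη1.filter_mono (nhds_le_nhdsSet hpK)] with q hq
    simp [a₂, hq]
  have hac₁ : HasCompactSupport a₁ := hac.smul_left (f := η)
  have hac₂ : HasCompactSupport a₂ := hac.smul_left (f := fun p => 1 - η p)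
  have hsplit : a₁ + a₂ = a := by
    ext p
    simp only [a₁, a₂, Pi.add_apply, ← add_smul, add_sub_cancel, one_smul]
  rw [← hsplit]
  exact .add hφ ha₁.continuous hac₁ ha₂.continuous hac₂ (hdV a₁ ha₁ hac₁ ha₁V)
    (hdW a₂ ha₂ hac₂ ha₂W)

variable [μ.IsAddHaarMeasure]

lemma integral_inv_one_add_mul_norm_pow {t : ℝ} (ht : 0 < t) :
    ∫ z, ((1 + t * ‖z‖) ^ (Module.finrank ℝ E + 1))⁻¹ ∂μ =
      (∫ z, ((1 + ‖z‖) ^ (Module.finrank ℝ E + 1))⁻¹ ∂μ) * t ^ (-(Module.finrank ℝ E : ℝ)) := by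
  have hscale := Measure.integral_comp_smul_of_nonneg μ
    (fun z : E => ((1 + ‖z‖) ^ (Module.finrank ℝ E + 1))⁻¹) t (hR := ht.le)
  simp only [norm_smul, Real.norm_of_nonneg ht.le] at hscale
  rw [hscale, Real.rpow_neg ht.le, Real.rpow_natCast, smul_eq_mul, mul_comm]

lemma integrable_inv_one_add_mul_norm_pow {t : ℝ} (ht : 0 < t) :
    Integrable (fun z : E => ((1 + t * ‖z‖) ^ (Module.finrank ℝ E + 1))⁻¹) μ := by
  have hint := (integrable_one_add_norm (μ := μ) (E := E)
    (r := (Module.finrank ℝ E : ℝ) + 1) (lt_add_one _)).comp_smul ht.ne'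
  refine hint.congr (.of_forall fun z => ?_)
  have : 0 ≤ 1 + t * ‖z‖ := by positivity
  simp only [norm_smul, Real.norm_of_nonneg ht.le, Real.rpow_neg this]
  norm_cast

lemma hasOscDecay_of_separatesAlong (hφ : ContDiff ℝ ∞ φ) (hφc : HasCompactSupport φ)
    {B : Set E} (hB : IsOpen B) {c : ℝ} (hc : 0 < c) {v : E → E}
    (hsep : SeparatesAlong (fderiv ℝ φ) B c v) (ha : ContDiff ℝ ∞ a)
    (hac : HasCompactSupport a) (haB : tsupport a ⊆ B) : HasOscDecay μ φ a := by
  set n := Module.finrank ℝ E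
  obtain ⟨C, hC⟩ := exists_norm_oscIntegral_multDeriv_mul_one_add_pow_le (μ := μ) hφ hφc hB hc
    hsep ha hac haB (n + 1)
  set J : ℝ := ∫ z : E, ((1 + ‖z‖) ^ (n + 1))⁻¹ ∂μ
  refine ⟨√(C * J), fun t ht L => ?_⟩
  have hbound (z : E) : ‖oscIntegral μ (fun p => t * φ (p + z) + L (p + z) - (t * φ p + L p))
      (multDeriv a z)‖ ≤ C * ((1 + t * ‖z‖) ^ (n + 1))⁻¹ := by
    have hphase : (fun p => t * φ (p + z) + L (p + z) - (t * φ p + L p)) =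
        fun p => t * (φ (p + z) - φ p) + L z := by
      ext p
      rw [map_add]
      ring
    rw [hphase, oscIntegral_phase_add_const, norm_mul, norm_exp_I_mul_ofReal, one_mul,
      ← div_eq_mul_inv, le_div_iff₀ (by positivity)]
    exact hC z t ht.le
  have hsq : ‖oscIntegral μ (fun p => t * φ p + L p) a‖ ^ 2 ≤ C * J * t ^ (-(n : ℝ)) := by
    rw [norm_oscIntegral_sq_eq (by fun_prop) ha.continuous hac, mul_assoc,
      ← integral_inv_one_add_mul_norm_pow ht, ← integral_const_mul]
    exact norm_integral_le_of_norm_le ((integrable_inv_one_add_mul_norm_pow ht).const_mul C)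
      (.of_forall hbound)
  calc ‖oscIntegral μ (fun p => t * φ p + L p) a‖
      ≤ √(C * J * t ^ (-(n : ℝ))) := Real.le_sqrt_of_sq_le hsq
    _ = √(C * J) * t ^ (-(n : ℝ) / 2) := by
        rw [Real.sqrt_mul' _ (Real.rpow_nonneg ht.le _), Real.sqrt_eq_rpow (t ^ _),
          ← Real.rpow_mul ht.le, mul_one_div]

lemma oscDecayOn_of_hasCompactSupport (hφ : ContDiff ℝ ∞ φ) (hφc : HasCompactSupport φ)
    (hinj : ∀ p ∈ V, Function.Injective (fderiv ℝ (fderiv ℝ φ) p)) : OscDecayOn μ φ V := by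
  intro a ha hac haV
  obtain ⟨U, -, haU, hdU⟩ : ∃ U, IsOpen U ∧ tsupport a ⊆ U ∧ OscDecayOn μ φ U := by
    refine hac.isCompact.induction_on ⟨∅, isOpen_empty, subset_rfl, oscDecayOn_empty⟩ ?_ ?_ ?_
    · exact fun s s' hs ⟨U, hU, hsU, hdU⟩ => ⟨U, hU, hs.trans hsU, hdU⟩
    · exact fun s s' ⟨U, hU, hsU, hdU⟩ ⟨U', hU', hsU', hdU'⟩ => ⟨U ∪ U', hU.union hU',
        Set.union_subset_union hsU hsU', hdU.union hφ.continuous hU hU' hdU'⟩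
    · intro p hp
      have hstrict : HasStrictFDerivAt (fderiv ℝ φ) (fderiv ℝ (fderiv ℝ φ) p) p :=
        (hφ.fderiv_right (m := ∞) le_rfl).contDiffAt.hasStrictFDerivAt (by simp)
      obtain ⟨B, hB, hpB, c, hc, v, hsep⟩ := exists_separatesAlong hstrict (hinj p (haV hp))
      exact ⟨B, mem_nhdsWithin_of_mem_nhds (hB.mem_nhds hpB), B, hB, subset_rfl,
        fun b hb hbc hbB => hasOscDecay_of_separatesAlong hφ hφc hB hc hsep hb hbc hbB⟩
  exact hdU a ha hac haU

theorem oscDecayOn_of_injective_hessian (hV : IsOpen V) (hφ : ContDiffOn ℝ ∞ φ V)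
    (hinj : ∀ p ∈ V, Function.Injective (fderiv ℝ (fderiv ℝ φ) p)) : OscDecayOn μ φ V := by
  intro a ha hac haV
  obtain ⟨U, hU, haU, hUV, hUc⟩ := exists_open_between_and_isCompact_closure hac.isCompact hV haV
  obtain ⟨η, hη, hη1, hηU⟩ := exists_contDiff_eventually_eq_one (isClosed_tsupport a) hU haU
  have hηV : tsupport η ⊆ V := hηU.trans (subset_closure.trans hUV)
  have hηc : HasCompactSupport η := hUc.of_isClosed_subset (isClosed_tsupport η)
    (hηU.trans subset_closure)
  have hsmooth : ContDiff ℝ ∞ fun p => η p * φ p := contDiff_of_tsupport_subset hV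
    (hη.contDiffOn.mul hφ) ((tsupport_mul_subset_left).trans hηV)
  have hd : OscDecayOn μ (fun p => η p * φ p) (tsupport a) := by
    refine oscDecayOn_of_hasCompactSupport hsmooth hηc.mul_right fun p hp => ?_
    have hlocal : (fun p => η p * φ p) =ᶠ[𝓝 p] φ := by
      filter_upwards [hη1.filter_mono (nhds_le_nhdsSet hp)] with q hq
      rw [hq, one_mul]
    rw [hlocal.fderiv.fderiv_eq]
    exact hinj p (haV hp)
  refine (hd a ha hac subset_rfl).congr_phase fun p hp => ?_
  simp only [hη1.self_of_nhdsSet p hp, one_mul]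

end OscillatoryDecay

section MellinTransform

lemma mellinConvergent_exp_neg_mul {a z : ℂ} (ha : 0 < a.re) (hz : 0 < z.re) :
    MellinConvergent (fun w : ℝ => Complex.exp (-(z * w))) a := by
  rw [MellinConvergent, mellin_convergent_iff_norm Set.Subset.rfl measurableSet_Ioi
    (by fun_prop)]
  simpa [Complex.norm_exp] using integrableOn_rpow_mul_exp_neg_mul_rpow (s := a.re - 1) (p := 1)
    (by linarith) one_pos hz

lemma differentiableOn_mellin_exp_neg_mul {a : ℂ} (ha : 0 < a.re) :
    DifferentiableOn ℂ (fun z : ℂ => mellin (fun w : ℝ => Complex.exp (-(z * w))) a)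
      {z | 0 < z.re} := by
  intro z₀ (hz₀ : 0 < z₀.re)
  have hhalf : 0 < ((z₀.re / 2 : ℝ) : ℂ).re := half_pos hz₀
  have ha' : 0 < (a + 1).re := by
    rw [Complex.add_re, Complex.one_re]
    linarith
  have hconv (z : ℂ) (hz : 0 < z.re) := mellinConvergent_exp_neg_mul ha' hz
  have hnear : {z : ℂ | z₀.re / 2 < z.re} ∈ 𝓝 z₀ :=
    (isOpen_lt continuous_const Complex.continuous_re).mem_nhds (half_lt_self hz₀)
  refine (hasDerivAt_integral_of_dominated_loc_of_deriv_le (μ := volume.restrict (Set.Ioi 0))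
    (F := fun z (w : ℝ) => (w : ℂ) ^ (a - 1) • Complex.exp (-(z * w)))
    (F' := fun z (w : ℝ) => -((w : ℂ) ^ (a + 1 - 1) • Complex.exp (-(z * w))))
    (bound := fun w : ℝ => ‖(w : ℂ) ^ (a + 1 - 1) • Complex.exp (-((z₀.re / 2 : ℝ) * w))‖)
    hnear ?_ (mellinConvergent_exp_neg_mul ha hz₀) (hconv z₀ hz₀).neg.aestronglyMeasurable ?_
    (hconv _ hhalf).norm ?_).2.differentiableAt.differentiableWithinAt
  · filter_upwards [hnear] with z hz
    exact (mellinConvergent_exp_neg_mul ha ((half_pos hz₀).trans hz)).aestronglyMeasurable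
  · refine (ae_restrict_mem measurableSet_Ioi).mono fun w (hw : 0 < w) z hz => ?_
    rw [norm_neg, norm_smul, norm_smul]
    gcongr
    rw [Complex.norm_exp, Complex.norm_exp, Real.exp_le_exp]
    have hzre : z₀.re / 2 ≤ z.re := le_of_lt hz
    simpa using mul_le_mul_of_nonneg_right hzre hw.le
  · refine (ae_restrict_mem measurableSet_Ioi).mono fun w (hw : 0 < w) z _ => ?_
    have hexp := (((hasDerivAt_id z).mul_const (w : ℂ)).neg.cexp).const_mul ((w : ℂ) ^ (a - 1))
    refine hexp.congr_deriv ?_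
    rw [add_sub_right_comm, Complex.cpow_add _ _ (Complex.ofReal_ne_zero.2 hw.ne'),
      Complex.cpow_one, smul_eq_mul]
    simp only [Pi.neg_apply, id_eq]
    ring

lemma mellin_exp_neg_mul {a z : ℂ} (ha : 0 < a.re) (hz : 0 < z.re) :
    mellin (fun w : ℝ => Complex.exp (-(z * w))) a = z ^ (-a) * Complex.Gamma a := by
  have hopen : IsOpen {z : ℂ | 0 < z.re} := isOpen_lt continuous_const Complex.continuous_re
  have hpow : DifferentiableOn ℂ (fun z : ℂ => z ^ (-a) * Complex.Gamma a) {z | 0 < z.re} :=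
    fun z hz => ((differentiableAt_id.cpow_const (Or.inl hz)).mul_const _).differentiableWithinAt
  have hreal (r : ℝ) (hr : 0 < r) :
      mellin (fun w : ℝ => Complex.exp (-(r * w))) a = (r : ℂ) ^ (-a) * Complex.Gamma a := by
    have hgamma := Complex.integral_cpow_mul_exp_neg_mul_Ioi ha hr
    rwa [one_div, Complex.inv_cpow _ _ (Complex.arg_ofReal_of_nonneg hr.le ▸ Real.pi_ne_zero.symm),
      ← Complex.cpow_neg] at hgamma
  have htendsto : Tendsto ((↑) : ℝ → ℂ) (𝓝[≠] 1) (𝓝[≠] 1) :=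
    Complex.continuous_ofReal.continuousWithinAt.tendsto_nhdsWithin
      fun r hr => Complex.ofReal_ne_one.2 hr
  have hev : ∀ᶠ r : ℝ in 𝓝[≠] 1,
      mellin (fun w : ℝ => Complex.exp (-(r * w))) a = (r : ℂ) ^ (-a) * Complex.Gamma a :=
    ((eventually_gt_nhds one_pos).filter_mono nhdsWithin_le_nhds).mono hreal
  exact ((differentiableOn_mellin_exp_neg_mul ha).analyticOnNhd
    hopen).eqOn_of_preconnected_of_frequently_eq (hpow.analyticOnNhd hopen)
    (convex_halfSpace_re_gt 0).isPreconnected (by simp)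
    (htendsto.frequently hev.frequently) hz

lemma mellinConvergent_schwartzMap (g : SchwartzMap ℝ ℂ) {a : ℂ} (ha : 0 < a.re) :
    MellinConvergent g a := by
  refine mellinConvergent_of_isBigO_rpow (a := a.re + 1) (b := 0)
    (g.continuous.locallyIntegrable.locallyIntegrableOn _) ?_ (lt_add_one _) ?_ ha
  · refine ((g.isBigO_cocompact_rpow (-(a.re + 1))).mono atTop_le_cocompact).trans_eventuallyEq ?_
    filter_upwards [eventually_ge_atTop 0] with w hw
    rw [Real.norm_of_nonneg hw]
  · simp only [neg_zero, Real.rpow_zero]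
    exact (g.continuous.continuousAt.tendsto.isBigO_one ℝ).mono nhdsWithin_le_nhds

variable {ψ : ℝ → ℂ} {a : ℂ}

lemma FT1_eq_fourier (ψ : ℝ → ℂ) (r : ℝ) :
    FT1 ψ r = FourierTransform.fourier ψ ((2 * Real.pi)⁻¹ * r) := by
  rw [Real.fourier_eq', FT1]
  congr with s
  rw [smul_eq_mul, mul_comm]
  congr 2
  have : (Real.pi : ℂ) ≠ 0 := Complex.ofReal_ne_zero.2 Real.pi_ne_zero
  simp only [neg_mul, mul_inv_rev, RCLike.inner_apply, Real.ringHom_apply, Complex.ofReal_neg,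
    Complex.ofReal_mul, Complex.ofReal_ofNat, Complex.ofReal_inv, neg_inj]
  field_simp

lemma mellinConvergent_FT1 (hψ : ContDiff ℝ ∞ ψ) (hψc : HasCompactSupport ψ) (ha : 0 < a.re) :
    MellinConvergent (FT1 ψ) a := by
  let g : SchwartzMap ℝ ℂ := FourierTransform.fourier (hψc.toSchwartzMap hψ)
  have hg : FT1 ψ = fun r => g ((2 * Real.pi)⁻¹ * r) := by
    ext r
    rw [FT1_eq_fourier, SchwartzMap.fourier_coe]
    rfl
  rw [hg, MellinConvergent.comp_mul_left (by positivity)]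
  exact mellinConvergent_schwartzMap g ha

/-- The density of the `a`-th Mellin moment of the Fourier transform of `ψ`, damped by the factor
`e^{-εw}`, which makes the interchange of the two integrals legitimate; the undamped moment is the
case `ε = 0`. -/
def mellinSymbol (a : ℂ) (ψ : ℝ → ℂ) (ε s : ℝ) : ℂ :=
  (ε + Complex.I * s) ^ (-a) * Complex.Gamma a * ψ s

lemma ofReal_add_I_mul_mem_slitPlane (ε : ℝ) {s : ℝ} (hs : s ≠ 0) :
    (ε + Complex.I * s : ℂ) ∈ Complex.slitPlane :=
  Or.inr (by simpa using hs)

lemma tsupport_mellinSymbol_subset (a : ℂ) (ψ : ℝ → ℂ) (ε : ℝ) :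
    tsupport (mellinSymbol a ψ ε) ⊆ tsupport ψ :=
  tsupport_mul_subset_right

lemma continuous_uncurry_mellinSymbol (hψ : Continuous ψ) (hψ0 : 0 ∉ tsupport ψ) :
    Continuous (Function.uncurry (mellinSymbol a ψ)) := by
  rw [continuous_iff_continuousAt]
  rintro ⟨ε, s⟩
  rcases eq_or_ne s 0 with rfl | hs
  · have hzero : Function.uncurry (mellinSymbol a ψ) =ᶠ[𝓝 (ε, 0)] fun _ => 0 := by
      filter_upwards [continuous_snd.continuousAt.eventually
        (notMem_tsupport_iff_eventuallyEq.1 hψ0)] with p hp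
      simp [Function.uncurry, mellinSymbol, hp]
    exact continuousAt_const.congr hzero.symm
  · refine ContinuousAt.mul (.mul ?_ continuousAt_const) (hψ.comp continuous_snd).continuousAt
    refine ContinuousAt.comp (g := fun z : ℂ => z ^ (-a)) ?_ (by fun_prop)
    exact continuousAt_cpow_const (ofReal_add_I_mul_mem_slitPlane ε hs)

lemma contDiff_mellinSymbol (hψ : ContDiff ℝ ∞ ψ) (hψ0 : 0 ∉ tsupport ψ) (ε : ℝ) :
    ContDiff ℝ ∞ (mellinSymbol a ψ ε) := by
  refine contDiff_of_tsupport_subset isOpen_compl_singleton (fun s (hs : s ≠ 0) => ?_)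
    ((tsupport_mellinSymbol_subset a ψ ε).trans (Set.subset_compl_singleton_iff.2 hψ0))
  have hpow : ContDiffAt ℂ ∞ (fun z : ℂ => z ^ (-a)) (ε + Complex.I * s) :=
    (analyticAt_id.cpow analyticAt_const (ofReal_add_I_mul_mem_slitPlane ε hs)).contDiffAt
  have hline : ContDiff ℝ ∞ fun s : ℝ => (ε + Complex.I * s : ℂ) :=
    contDiff_const.add (contDiff_const.mul Complex.ofRealCLM.contDiff)
  exact ((((hpow.restrict_scalars ℝ).comp s hline.contDiffAt).mul contDiffAt_const).mul
    hψ.contDiffAt).contDiffWithinAt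

lemma mellin_exp_mul_FT1 (hψ : Continuous ψ) (hψc : HasCompactSupport ψ) (ha : 0 < a.re) {ε : ℝ}
    (hε : 0 < ε) : mellin (fun w => Complex.exp (-(ε * w)) * FT1 ψ w) a =
      ∫ s, mellinSymbol a ψ ε s := by
  let kernel (w s : ℝ) : ℂ := (w : ℂ) ^ (a - 1) • Complex.exp (-((ε + Complex.I * s) * w)) * ψ s
  have hkernel (w s : ℝ) : kernel w s = Complex.exp (-(Complex.I * s * w)) *
      ((w : ℂ) ^ (a - 1) • Complex.exp (-(ε * w)) * ψ s) := by
    simp only [kernel, add_mul, neg_add, Complex.exp_add, smul_eq_mul]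
    ring
  have hintegrable : Integrable (Function.uncurry kernel)
      ((volume.restrict (Set.Ioi 0)).prod volume) := by
    have hprod := Integrable.mul_prod (μ := volume.restrict (Set.Ioi 0)) (ν := volume)
      (mellinConvergent_exp_neg_mul ha (z := ε) (by simpa))
      (hψ.integrable_of_hasCompactSupport hψc)
    refine (hprod.bdd_mul (f := fun p : ℝ × ℝ => Complex.exp (-(Complex.I * p.2 * p.1))) (c := 1)
      (by fun_prop) (ae_of_all _ fun p => by simp [Complex.norm_exp])).congr
      (ae_of_all _ fun p => (hkernel p.1 p.2).symm)
  calc mellin (fun w => Complex.exp (-(ε * w)) * FT1 ψ w) a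
      = ∫ w in Set.Ioi (0 : ℝ), ∫ s, kernel w s := by
        refine integral_congr_ae (ae_of_all _ fun w => ?_)
        simp only [FT1, hkernel, ← integral_const_mul, smul_eq_mul]
        congr with s
        ring
    _ = ∫ s, ∫ w in Set.Ioi (0 : ℝ), kernel w s := integral_integral_swap hintegrable
    _ = ∫ s, mellinSymbol a ψ ε s := by
        refine integral_congr_ae (ae_of_all _ fun s => ?_)
        simp only [kernel, integral_mul_const, mellinSymbol]
        exact congrArg (· * ψ s) (mellin_exp_neg_mul ha (by simpa))

theorem mellin_FT1 (hψ : ContDiff ℝ ∞ ψ) (hψc : HasCompactSupport ψ) (hψ0 : 0 ∉ tsupport ψ)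
    (ha : 0 < a.re) : mellin (FT1 ψ) a = ∫ s, mellinSymbol a ψ 0 s := by
  have hdamped : Tendsto (fun ε : ℝ => mellin (fun w => Complex.exp (-(ε * w)) * FT1 ψ w) a)
      (𝓝[>] 0) (𝓝 (mellin (FT1 ψ) a)) := by
    have hconv := mellinConvergent_FT1 hψ hψc ha
    have hswap (ε w : ℝ) : (w : ℂ) ^ (a - 1) • (Complex.exp (-(ε * w)) * FT1 ψ w) =
        Complex.exp (-(ε * w)) * ((w : ℂ) ^ (a - 1) • FT1 ψ w) := mul_left_comm _ _ _
    simp only [mellin, hswap]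
    refine tendsto_integral_filter_of_dominated_convergence _ (.of_forall fun ε => ?_) ?_ hconv.norm
      (ae_of_all _ fun w => ?_)
    · exact (Continuous.aestronglyMeasurable (by fun_prop)).mul hconv.aestronglyMeasurable
    · filter_upwards [self_mem_nhdsWithin] with ε (hε : 0 < ε)
      refine (ae_restrict_mem measurableSet_Ioi).mono fun w (hw : 0 < w) => ?_
      rw [norm_mul, Complex.norm_exp]
      refine mul_le_of_le_one_left (norm_nonneg _) (Real.exp_le_one_iff.2 ?_)
      simpa using (mul_pos hε hw).le
    · refine ((Continuous.tendsto' (by fun_prop) 0 _ ?_).mono_left nhdsWithin_le_nhds)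
      simp
  have hsymbol : Continuous fun ε : ℝ => ∫ s, mellinSymbol a ψ ε s := by
    rw [← continuousOn_univ]
    refine continuousOn_integral_of_compact_support hψc
      (continuous_uncurry_mellinSymbol hψ.continuous hψ0).continuousOn fun ε s _ hs => ?_
    exact image_eq_zero_of_notMem_tsupport fun h => hs (tsupport_mellinSymbol_subset a ψ ε h)
  refine tendsto_nhds_unique hdamped ((hsymbol.tendsto 0 |>.mono_left nhdsWithin_le_nhds).congr' ?_)
  filter_upwards [self_mem_nhdsWithin] with ε hε
  exact (mellin_exp_mul_FT1 hψ.continuous hψc ha hε).symm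

lemma mellin_FT1_comp_sub (hψ : ContDiff ℝ ∞ ψ) (hψc : HasCompactSupport ψ)
    (hψ0 : 0 ∉ tsupport ψ) (ha : 0 < a.re) (y : ℝ) :
    mellin (fun w => FT1 ψ (w - y)) a =
      ∫ s : ℝ, Complex.exp (Complex.I * (s * y : ℝ)) * mellinSymbol a ψ 0 s := by
  let ψy (s : ℝ) : ℂ := Complex.exp (Complex.I * (s * y : ℝ)) * ψ s
  have hψy : ContDiff ℝ ∞ ψy :=
    (contDiff_const.mul (Complex.ofRealCLM.contDiff.comp (contDiff_id.mul contDiff_const))).cexp.mul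
      hψ
  have hmodulation : (fun w => FT1 ψ (w - y)) = FT1 ψy := by
    ext w
    simp only [FT1, ψy]
    congr with s
    rw [mul_comm (Complex.exp _) (ψ s), mul_assoc (ψ s), ← Complex.exp_add]
    push_cast
    ring_nf
  rw [hmodulation, mellin_FT1 hψy hψc.mul_left (fun h => hψ0 (tsupport_mul_subset_right h)) ha]
  simp only [mellinSymbol, ψy, mul_left_comm]

lemma integral_max_rpow_smul {lam : ℝ} (hlam : lam ≠ 0) (f : ℝ → ℂ) :
    ∫ u, (max (1 - u) 0 ^ lam : ℝ) • f (1 - u) = mellin f (lam + 1) := by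
  rw [integral_sub_left_eq_self (fun v => (max v 0 ^ lam : ℝ) • f v) volume 1, mellin,
    ← setIntegral_eq_integral_of_forall_compl_eq_zero (s := Set.Ioi 0)]
  · refine setIntegral_congr_fun measurableSet_Ioi fun w (hw : 0 < w) => ?_
    simp only [max_eq_left hw.le, add_sub_cancel_right, smul_eq_mul, Complex.real_smul,
      Complex.ofReal_cpow hw.le]
  · intro w hw
    rw [max_eq_right (not_lt.1 hw), Real.zero_rpow hlam, zero_smul]

theorem integral_max_rpow_smul_FT1 (hψ : ContDiff ℝ ∞ ψ) (hψc : HasCompactSupport ψ)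
    (hψ0 : 0 ∉ tsupport ψ) {lam : ℝ} (hlam : -1 < lam) (hlam0 : lam ≠ 0) {T : ℝ} (hT : 0 < T)
    (ϱ : ℝ) : ∫ u, (max (1 - u) 0 ^ lam : ℝ) • (T • FT1 ψ (T * (ϱ - u))) =
      (T ^ (-lam) : ℝ) * ∫ s : ℝ,
        Complex.exp (Complex.I * (s * (T * (1 - ϱ)) : ℝ)) * mellinSymbol (lam + 1) ψ 0 s := by
  have hre : 0 < (lam + 1 : ℂ).re := by simpa using neg_lt_iff_pos_add.1 hlam
  have hshift (u : ℝ) : T * (ϱ - u) = T * (1 - u) - T * (1 - ϱ) := by ring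
  have hTC : (T : ℂ) ≠ 0 := Complex.ofReal_ne_zero.2 hT.ne'
  simp only [hshift]
  rw [integral_max_rpow_smul hlam0 fun v => T • FT1 ψ (T * v - T * (1 - ϱ)),
    ← mellin_FT1_comp_sub hψ hψc hψ0 hre, mellin_const_smul,
    mellin_comp_mul_left (fun w => FT1 ψ (w - T * (1 - ϱ))) _ hT, neg_add,
    Complex.cpow_add _ _ hTC, Complex.cpow_neg_one, Complex.ofReal_cpow hT.le, smul_eq_mul,
    Complex.real_smul, Complex.ofReal_neg]
  field_simp

end MellinTransform

section PositivelyHomogeneous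

variable {E : Type*} [NormedAddCommGroup E] [NormedSpace ℝ E] {ρ : E → ℝ} {ξ : E}

/-- Positive homogeneity of degree one, the property of a Minkowski functional behind Euler's
identity and the degeneracy of its Hessian in the radial direction. -/
def IsPosHomogeneous (ρ : E → ℝ) : Prop :=
  ∀ ⦃t : ℝ⦄, 0 < t → ∀ ξ, ρ (t • ξ) = t * ρ ξ

lemma hasDerivAt_comp_smul_one {F : Type*} [NormedAddCommGroup F] [NormedSpace ℝ F] {f : E → F}
    (hf : DifferentiableAt ℝ f ξ) :
    HasDerivAt (fun t : ℝ => f (t • ξ)) (fderiv ℝ f ξ ξ) 1 := by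
  have hray : HasDerivAt (fun t : ℝ => t • ξ) ((1 : ℝ) • ξ) 1 := (hasDerivAt_id 1).smul_const ξ
  rw [one_smul] at hray
  exact HasFDerivAt.comp_hasDerivAt 1 ((one_smul ℝ ξ).symm ▸ hf.hasFDerivAt) hray

namespace IsPosHomogeneous

lemma fderiv_smul (hρ : IsPosHomogeneous ρ) {t : ℝ} (ht : 0 < t) (ξ : E) :
    fderiv ℝ ρ (t • ξ) = fderiv ℝ ρ ξ := by
  have hscaled : (fun η => ρ (t • η)) = t • ρ := funext fun η => hρ ht η
  have h := fderiv_comp_smul (𝕜 := ℝ) (f := ρ) (x := ξ) t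
  rw [hscaled, fderiv_const_smul_field] at h
  exact (smul_right_injective _ ht.ne' h).symm

lemma fderiv_self (hρ : IsPosHomogeneous ρ) (hξ : DifferentiableAt ℝ ρ ξ) :
    fderiv ℝ ρ ξ ξ = ρ ξ := by
  have hlinear : (fun t : ℝ => ρ (t • ξ)) =ᶠ[𝓝 1] fun t => t * ρ ξ :=
    (eventually_gt_nhds one_pos).mono fun t ht => hρ ht ξ
  have h := (hasDerivAt_comp_smul_one hξ).congr_of_eventuallyEq hlinear.symm
  simpa using h.unique ((hasDerivAt_id (1 : ℝ)).mul_const (ρ ξ))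

lemma fderiv_fderiv_self (hρ : IsPosHomogeneous ρ) (hξ : DifferentiableAt ℝ (fderiv ℝ ρ) ξ) :
    fderiv ℝ (fderiv ℝ ρ) ξ ξ = 0 := by
  have hconst : (fun t : ℝ => fderiv ℝ ρ (t • ξ)) =ᶠ[𝓝 1] fun _ => fderiv ℝ ρ ξ :=
    (eventually_gt_nhds one_pos).mono fun t ht => hρ.fderiv_smul ht ξ
  exact ((hasDerivAt_comp_smul_one hξ).congr_of_eventuallyEq hconst.symm).unique
    (hasDerivAt_const 1 _)

lemma exists_eq_smul_of_fderiv_fderiv_eq_zero [FiniteDimensional ℝ E] (hρ : IsPosHomogeneous ρ)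
    (hdiff : DifferentiableAt ℝ (fderiv ℝ ρ) ξ) (hξ : ξ ≠ 0)
    (hrank : LinearMap.rank (fderiv ℝ (fderiv ℝ ρ) ξ : E →ₗ[ℝ] E →L[ℝ] ℝ) =
      (Module.finrank ℝ E - 1 : ℕ)) {v : E} (hv : fderiv ℝ (fderiv ℝ ρ) ξ v = 0) :
    ∃ c : ℝ, v = c • ξ := by
  set H : E →ₗ[ℝ] E →L[ℝ] ℝ := (fderiv ℝ (fderiv ℝ ρ) ξ).toLinearMap
  have hξker : ξ ∈ LinearMap.ker H := hρ.fderiv_fderiv_self hdiff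
  have hker : Module.finrank ℝ (LinearMap.ker H) = 1 := by
    have hrange : Module.finrank ℝ (LinearMap.range H) = Module.finrank ℝ E - 1 :=
      Module.finrank_eq_of_rank_eq hrank
    have hpos : 0 < Module.finrank ℝ E := Module.finrank_pos_iff_exists_ne_zero.2 ⟨ξ, hξ⟩
    have := H.finrank_range_add_finrank_ker
    lia
  obtain ⟨c, hc⟩ := (finrank_eq_one_iff_of_nonzero' (⟨ξ, hξker⟩ : LinearMap.ker H)
    (Subtype.coe_ne_coe.1 hξ)).1 hker ⟨v, hv⟩
  exact ⟨c, (congrArg Subtype.val hc).symm⟩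

end IsPosHomogeneous

/-- The phase `s (1 - ρ(ξ))` produced by writing a function of `1 - ρ` as a Fourier integral in the
dual variable `s`. -/
def conePhase (ρ : E → ℝ) (p : E × ℝ) : ℝ := p.2 * (1 - ρ p.1)

variable {p : E × ℝ}

lemma contDiffAt_conePhase {n : WithTop ℕ∞} (hρ : ContDiffAt ℝ n ρ p.1) :
    ContDiffAt ℝ n (conePhase ρ) p :=
  contDiffAt_snd.mul (contDiffAt_const.sub (hρ.comp p contDiffAt_fst))

lemma fderiv_conePhase_apply (hρ : DifferentiableAt ℝ ρ p.1) (b : E × ℝ) :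
    fderiv ℝ (conePhase ρ) p b = b.2 * (1 - ρ p.1) - p.2 * fderiv ℝ ρ p.1 b.1 := by
  have hderiv : HasFDerivAt (conePhase ρ) _ p :=
    hasFDerivAt_snd.mul ((hρ.hasFDerivAt.comp p hasFDerivAt_fst).const_sub 1)
  rw [hderiv.fderiv]
  simp only [smul_neg, add_apply, neg_apply, smul_apply, ContinuousLinearMap.comp_apply,
    ContinuousLinearMap.coe_fst', smul_eq_mul, ContinuousLinearMap.coe_snd']
  ring

lemma fderiv_fderiv_conePhase_apply (hρ : ContDiffAt ℝ 2 ρ p.1) (a b : E × ℝ) :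
    fderiv ℝ (fderiv ℝ (conePhase ρ)) p a b = -(b.2 * fderiv ℝ ρ p.1 a.1) -
      a.2 * fderiv ℝ ρ p.1 b.1 - p.2 * fderiv ℝ (fderiv ℝ ρ) p.1 a.1 b.1 := by
  have hphase : DifferentiableAt ℝ (fderiv ℝ (conePhase ρ)) p :=
    ((contDiffAt_conePhase hρ).fderiv_right (m := 1) (by norm_num)).differentiableAt one_ne_zero
  have hgradient : DifferentiableAt ℝ (fderiv ℝ ρ) p.1 :=
    (hρ.fderiv_right (m := 1) (by norm_num)).differentiableAt one_ne_zero
  have hnear : (fun q => fderiv ℝ (conePhase ρ) q b) =ᶠ[𝓝 p]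
      fun q => b.2 * (1 - ρ q.1) - q.2 * fderiv ℝ ρ q.1 b.1 := by
    filter_upwards [continuous_fst.continuousAt.eventually (hρ.eventually (by simp))] with q hq
    exact fderiv_conePhase_apply (hq.differentiableAt two_ne_zero) b
  have hvalue := (((hρ.differentiableAt two_ne_zero).hasFDerivAt.comp p
    hasFDerivAt_fst).const_sub 1 |>.const_mul b.2).sub (hasFDerivAt_snd.mul
      ((hgradient.hasFDerivAt.comp p hasFDerivAt_fst).clm_apply (hasFDerivAt_const b.1 p)))
  have happly := congrArg (· a) ((hphase.hasFDerivAt.clm_apply (hasFDerivAt_const b p)).unique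
    (hvalue.congr_of_eventuallyEq hnear))
  simp only [ContinuousLinearMap.comp_zero, zero_add, ContinuousLinearMap.flip_apply, smul_neg,
    Function.comp_apply, sub_apply, neg_apply, smul_apply, ContinuousLinearMap.comp_apply,
    ContinuousLinearMap.coe_fst', smul_eq_mul, add_apply, ContinuousLinearMap.coe_snd'] at happly
  linarith

theorem IsPosHomogeneous.injective_fderiv_fderiv_conePhase [FiniteDimensional ℝ E]
    (hρ : IsPosHomogeneous ρ) (hsmooth : ContDiffAt ℝ 2 ρ p.1) (hpos : 0 < ρ p.1)
    (hp : p.2 ≠ 0)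
    (hrank : LinearMap.rank (fderiv ℝ (fderiv ℝ ρ) p.1 : E →ₗ[ℝ] E →L[ℝ] ℝ) =
      (Module.finrank ℝ E - 1 : ℕ)) :
    Function.Injective (fderiv ℝ (fderiv ℝ (conePhase ρ)) p) := by
  have hdiff : DifferentiableAt ℝ ρ p.1 := hsmooth.differentiableAt two_ne_zero
  have hdiff' : DifferentiableAt ℝ (fderiv ℝ ρ) p.1 :=
    (hsmooth.fderiv_right (m := 1) (by norm_num)).differentiableAt one_ne_zero
  have hsymm : IsSymmSndFDerivAt ℝ ρ p.1 := hsmooth.isSymmSndFDerivAt (by simp)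
  rw [injective_iff_map_eq_zero]
  rintro ⟨v, w⟩ hker
  have hform (b : E × ℝ) : -(b.2 * fderiv ℝ ρ p.1 v) - w * fderiv ℝ ρ p.1 b.1 -
      p.2 * fderiv ℝ (fderiv ℝ ρ) p.1 v b.1 = 0 := by
    rw [← fderiv_fderiv_conePhase_apply hsmooth (v, w) b, hker, zero_apply]
  have hv : fderiv ℝ ρ p.1 v = 0 := by simpa using hform (0, 1)
  have hw : w = 0 := by
    have hradial := hform (p.1, 0)
    rw [hsymm.eq v p.1, hρ.fderiv_fderiv_self hdiff', hρ.fderiv_self hdiff] at hradial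
    simpa [hpos.ne'] using hradial
  have hHess : fderiv ℝ (fderiv ℝ ρ) p.1 v = 0 := by
    ext b
    simpa [hw, hp] using hform (b, 0)
  have hne : p.1 ≠ 0 := fun h => by
    have := hρ two_pos p.1
    rw [h, smul_zero, ← h] at this
    linarith
  obtain ⟨c, rfl⟩ := hρ.exists_eq_smul_of_fderiv_fderiv_eq_zero hdiff' hne hrank hHess
  rw [map_smul, hρ.fderiv_self hdiff, smul_eq_mul] at hv
  simp [(mul_eq_zero.1 hv).resolve_right hpos.ne', hw]

end PositivelyHomogeneous

section ConicalMultiplier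

variable {d : ℕ} {Ω : Set (Euc d)} {ρ : Euc d → ℝ} {χ : ℝ → ℝ}

namespace IsMinkowskiGauge

lemma isPosHomogeneous (hρ : IsMinkowskiGauge d Ω ρ) : IsPosHomogeneous ρ := fun t ht ξ => by
  rw [hρ.eq_gauge, gauge_smul_of_nonneg ht.le, smul_eq_mul]

lemma continuous (hρ : IsMinkowskiGauge d Ω ρ) : Continuous ρ := by
  rw [hρ.eq_gauge]
  exact continuous_gauge hρ.convex (hρ.isOpen.mem_nhds hρ.zero_mem)

lemma isCompact_preimage (hρ : IsMinkowskiGauge d Ω ρ) {K : Set ℝ} (hK : IsCompact K) :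
    IsCompact (ρ ⁻¹' K) := by
  obtain ⟨R, hR⟩ := hK.bddAbove
  obtain ⟨r, hr, hΩr⟩ := hρ.isBounded.subset_closedBall_lt 0 0
  refine (isCompact_closedBall (0 : Euc d) (R * r)).of_isClosed_subset
    (hK.isClosed.preimage hρ.continuous) fun ξ hξ => ?_
  rw [mem_closedBall_zero_iff, ← div_le_iff₀ hr]
  have habsorbent : Absorbent ℝ Ω := absorbent_nhds_zero (hρ.isOpen.mem_nhds hρ.zero_mem)
  calc ‖ξ‖ / r ≤ ρ ξ := hρ.eq_gauge ▸ le_gauge_of_subset_closedBall habsorbent hr.le hΩr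
    _ ≤ R := hR hξ

lemma tsupport_comp_subset_compl_zero (hρ : IsMinkowskiGauge d Ω ρ)
    (hχpos : tsupport χ ⊆ Set.Ioi 0) : tsupport (χ ∘ ρ) ⊆ {0}ᶜ := by
  rintro ξ hξ rfl
  have hzero := hχpos (tsupport_comp_subset_preimage χ hρ.continuous hξ)
  rw [hρ.eq_gauge, gauge_zero] at hzero
  exact Set.self_notMem_Ioi hzero

lemma contDiff_comp (hρ : IsMinkowskiGauge d Ω ρ) (hχ : ContDiff ℝ ∞ χ)
    (hχpos : tsupport χ ⊆ Set.Ioi 0) : ContDiff ℝ ∞ (χ ∘ ρ) :=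
  contDiff_of_tsupport_subset isOpen_compl_singleton (hχ.comp_contDiffOn hρ.smooth)
    (hρ.tsupport_comp_subset_compl_zero hχpos)

lemma hasCompactSupport_comp (hρ : IsMinkowskiGauge d Ω ρ) (hχc : HasCompactSupport χ) :
    HasCompactSupport (χ ∘ ρ) :=
  (hρ.isCompact_preimage hχc.isCompact).of_isClosed_subset (isClosed_tsupport _)
    (tsupport_comp_subset_preimage χ hρ.continuous)

end IsMinkowskiGauge

instance isAddHaarMeasure_volume_euc_prod (d : ℕ) :
    (volume : Measure (Euc d × ℝ)).IsAddHaarMeasure :=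
  inferInstanceAs (((volume : Measure (Euc d)).prod (volume : Measure ℝ)).IsAddHaarMeasure)

/-- The amplitude `χ(ρ(ξ)) m(s)` accompanying the phase `conePhase ρ`. -/
def coneAmplitude (χ : ℝ → ℝ) (ρ : Euc d → ℝ) (m : ℝ → ℂ) (p : Euc d × ℝ) : ℂ :=
  (χ ∘ ρ) p.1 * m p.2

variable {m : ℝ → ℂ}

lemma tsupport_coneAmplitude_subset :
    tsupport (coneAmplitude χ ρ m) ⊆ tsupport (χ ∘ ρ) ×ˢ tsupport m := by
  refine closure_minimal (fun p hp => ?_) ((isClosed_tsupport _).prod (isClosed_tsupport _))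
  have hfactors : (χ ∘ ρ) p.1 ≠ 0 ∧ m p.2 ≠ 0 := by
    simpa [coneAmplitude] using Function.mem_support.1 hp
  exact ⟨subset_tsupport _ hfactors.1, subset_tsupport _ hfactors.2⟩

lemma contDiff_coneAmplitude (hρ : IsMinkowskiGauge d Ω ρ) (hχ : ContDiff ℝ ∞ χ)
    (hχpos : tsupport χ ⊆ Set.Ioi 0) (hm : ContDiff ℝ ∞ m) :
    ContDiff ℝ ∞ (coneAmplitude χ ρ m) :=
  (Complex.ofRealCLM.contDiff.comp ((hρ.contDiff_comp hχ hχpos).comp contDiff_fst)).mul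
    (hm.comp contDiff_snd)

lemma hasCompactSupport_coneAmplitude (hρ : IsMinkowskiGauge d Ω ρ) (hχc : HasCompactSupport χ)
    (hmc : HasCompactSupport m) : HasCompactSupport (coneAmplitude χ ρ m) :=
  ((hρ.hasCompactSupport_comp hχc).isCompact.prod hmc.isCompact).of_isClosed_subset
    (isClosed_tsupport _) tsupport_coneAmplitude_subset

theorem hasOscDecay_conePhase (hρ : IsMinkowskiGauge d Ω ρ) (hcurv : HasNonvanishingCurvature d ρ)
    (hχ : ContDiff ℝ ∞ χ) (hχc : HasCompactSupport χ) (hχpos : tsupport χ ⊆ Set.Ioi 0)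
    (hm : ContDiff ℝ ∞ m) (hmc : HasCompactSupport m) (hm0 : 0 ∉ tsupport m) :
    HasOscDecay volume (conePhase ρ) (coneAmplitude χ ρ m) := by
  have hsmooth {ξ : Euc d} (hξ : ξ ≠ 0) : ContDiffAt ℝ ∞ ρ ξ :=
    hρ.smooth.contDiffAt (isOpen_compl_singleton.mem_nhds hξ)
  have hdecay : OscDecayOn volume (conePhase ρ) ({0}ᶜ ×ˢ {0}ᶜ : Set (Euc d × ℝ)) := by
    refine oscDecayOn_of_injective_hessian (isOpen_compl_singleton.prod isOpen_compl_singleton)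
      (fun p hp => (contDiffAt_conePhase (hsmooth hp.1)).contDiffWithinAt) fun p hp => ?_
    refine hρ.isPosHomogeneous.injective_fderiv_fderiv_conePhase ((hsmooth hp.1).of_le ?_)
      (hρ.pos _ hp.1) hp.2 ?_
    · exact WithTop.coe_le_coe.2 le_top
    · simpa using hcurv p.1 hp.1
  exact hdecay _ (contDiff_coneAmplitude hρ hχ hχpos hm)
    (hasCompactSupport_coneAmplitude hρ hχc hmc) (tsupport_coneAmplitude_subset.trans (Set.prod_mono
      (hρ.tsupport_comp_subset_compl_zero hχpos) (Set.subset_compl_singleton_iff.2 hm0)))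

lemma oscIntegral_conePhase (hρ : IsMinkowskiGauge d Ω ρ) (hχ : ContDiff ℝ ∞ χ)
    (hχc : HasCompactSupport χ) (hχpos : tsupport χ ⊆ Set.Ioi 0) (hm : ContDiff ℝ ∞ m)
    (hmc : HasCompactSupport m) (t : ℝ) (x : Euc d) :
    oscIntegral volume (fun p => t * conePhase ρ p + ⟪x, p.1⟫) (coneAmplitude χ ρ m) =
      ∫ ξ, χ (ρ ξ) * (∫ s : ℝ, Complex.exp (Complex.I * (s * (t * (1 - ρ ξ)) : ℝ)) * m s) *
        Complex.exp (Complex.I * (⟪x, ξ⟫ : ℝ)) := by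
  have hρcont := hρ.continuous
  have hphase : Continuous fun p : Euc d × ℝ => t * conePhase ρ p + ⟪x, p.1⟫ := by
    unfold conePhase
    fun_prop
  have hamplitude := (contDiff_coneAmplitude hρ hχ hχpos hm).continuous
  rw [oscIntegral, Measure.volume_eq_prod, integral_prod _ (integrable_oscIntegrand hphase
    hamplitude (hasCompactSupport_coneAmplitude hρ hχc hmc))]
  congr with ξ
  rw [← integral_const_mul, ← integral_mul_const]
  congr with s
  rw [Complex.ofReal_add, mul_add, Complex.exp_add,
    show t * conePhase ρ (ξ, s) = s * (t * (1 - ρ ξ)) from mul_left_comm t s _]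
  simp only [coneAmplitude, Function.comp_apply]
  ring

end ConicalMultiplier

section KernelBound

variable {d : ℕ} {Ω : Set (Euc d)} {ρ : Euc d → ℝ} {χ Φ Ψ : ℝ → ℝ} {lam : ℝ}

lemma norm_invFTd_le (m : Euc d → ℂ) (x : Euc d) :
    ‖invFTd m x‖ ≤ ((2 * Real.pi) ^ d)⁻¹ * ∫ ξ, ‖m ξ‖ := by
  have hpos : 0 ≤ ((2 * Real.pi) ^ d)⁻¹ := by positivity
  rw [invFTd, norm_smul, Real.norm_of_nonneg hpos]
  gcongr
  refine (norm_integral_le_integral_norm _).trans_eq (integral_congr_ae (ae_of_all _ fun ξ => ?_))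
  simp only [norm_mul, norm_exp_I_mul_ofReal, mul_one]

lemma invFTd_hfun_succ (hρ : IsMinkowskiGauge d Ω ρ) (hlam : -1 < lam) (hlam0 : lam ≠ 0)
    (hχ : ContDiff ℝ ∞ χ) (hχc : HasCompactSupport χ) (hχpos : tsupport χ ⊆ Set.Ioi 0)
    (hψ : ContDiff ℝ ∞ fun s => (Ψ s : ℂ)) (hψc : HasCompactSupport fun s => (Ψ s : ℂ))
    (hψ0 : 0 ∉ tsupport fun s => (Ψ s : ℂ)) (k : ℕ) (x : Euc d) :
    invFTd (fun ξ => hfun χ Φ Ψ lam (k + 1) (ρ ξ)) x =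
      (((2 * Real.pi) ^ d)⁻¹ * (2 * Real.pi)⁻¹ * ((2 : ℝ) ^ k) ^ (-lam)) •
        oscIntegral volume (fun p => 2 ^ k * conePhase ρ p + ⟪x, p.1⟫)
          (coneAmplitude χ ρ (mellinSymbol (lam + 1) (fun s => (Ψ s : ℂ)) 0)) := by
  have hmc := hψc.mono' ((subset_tsupport _).trans
    (tsupport_mellinSymbol_subset (lam + 1) (fun s => (Ψ s : ℂ)) 0))
  rw [oscIntegral_conePhase hρ hχ hχc hχpos (contDiff_mellinSymbol hψ hψ0 0) hmc, invFTd,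
    ← integral_smul, ← integral_smul]
  congr with ξ
  simp only [hfun, FT1R, integral_max_rpow_smul_FT1 hψ hψc hψ0 hlam hlam0 (pow_pos two_pos k)]
  simp only [Complex.real_smul, Complex.ofReal_mul]
  ring

lemma exists_norm_invFTd_hfun_succ_le (hρ : IsMinkowskiGauge d Ω ρ)
    (hcurv : HasNonvanishingCurvature d ρ) (hlam : -1 < lam) (hlam0 : lam ≠ 0)
    (hχ : ContDiff ℝ ∞ χ) (hχc : HasCompactSupport χ) (hχpos : tsupport χ ⊆ Set.Ioi 0)
    (hψ : ContDiff ℝ ∞ fun s => (Ψ s : ℂ)) (hψc : HasCompactSupport fun s => (Ψ s : ℂ))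
    (hψ0 : 0 ∉ tsupport fun s => (Ψ s : ℂ)) :
    ∃ C : ℝ, ∀ (k : ℕ) (x : Euc d), ‖invFTd (fun ξ => hfun χ Φ Ψ lam (k + 1) (ρ ξ)) x‖ ≤
      C * ((2 : ℝ) ^ k) ^ (-(lam + ((d : ℝ) + 1) / 2)) := by
  have hsub := tsupport_mellinSymbol_subset (lam + 1) (fun s => (Ψ s : ℂ)) 0
  obtain ⟨C, hC⟩ := hasOscDecay_conePhase hρ hcurv hχ hχc hχpos (contDiff_mellinSymbol hψ hψ0 0)
    (hψc.mono' ((subset_tsupport _).trans hsub)) (fun h => hψ0 (hsub h))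
  refine ⟨((2 * Real.pi) ^ d)⁻¹ * (2 * Real.pi)⁻¹ * C, fun k x => ?_⟩
  have hT : (0 : ℝ) < 2 ^ k := by positivity
  have hosc := hC _ hT ((innerSL ℝ x).comp (ContinuousLinearMap.fst ℝ (Euc d) ℝ))
  have hdim : -(Module.finrank ℝ (Euc d × ℝ) : ℝ) / 2 = -(((d : ℝ) + 1) / 2) := by
    simp only [Module.finrank_prod, finrank_euclideanSpace, Fintype.card_fin, Module.finrank_self,
      Nat.cast_add, Nat.cast_one]
    ring
  rw [hdim] at hosc
  rw [invFTd_hfun_succ hρ hlam hlam0 hχ hχc hχpos hψ hψc hψ0, norm_smul,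
    Real.norm_of_nonneg (by positivity), neg_add, Real.rpow_add hT]
  exact (mul_le_mul_of_nonneg_left hosc (by positivity)).trans_eq (by ring)

lemma contDiff_half_sub (hΦ : ContDiff ℝ ∞ Φ) : ContDiff ℝ ∞ fun x => Φ (x / 2) - Φ x :=
  (hΦ.comp (contDiff_id.div_const 2)).sub hΦ

lemma hasCompactSupport_half_sub (hΦc : HasCompactSupport Φ) :
    HasCompactSupport fun x => Φ (x / 2) - Φ x :=
  (hΦc.comp_homeomorph (Homeomorph.mulRight₀ (2 : ℝ)⁻¹ (inv_ne_zero two_ne_zero))).sub hΦc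

lemma zero_notMem_tsupport_half_sub (hΦ1 : Φ =ᶠ[𝓝 0] 1) :
    0 ∉ tsupport fun x => Φ (x / 2) - Φ x := by
  have hhalf : Tendsto (fun x : ℝ => x / 2) (𝓝 0) (𝓝 0) :=
    Continuous.tendsto' (by fun_prop) 0 0 (zero_div 2)
  rw [notMem_tsupport_iff_eventuallyEq]
  filter_upwards [hΦ1, hhalf.eventually hΦ1] with s hs hs2
  simp [hs, hs2]

theorem kernel_sup_norm_bound_general (hρ : IsMinkowskiGauge d Ω ρ)
    (hcurv : HasNonvanishingCurvature d ρ) (hlam : -1 < lam) (hlam0 : lam ≠ 0)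
    (hχ : ContDiff ℝ ∞ χ) (hχc : HasCompactSupport χ) (hχpos : tsupport χ ⊆ Set.Ioi 0)
    (hΦ : ContDiff ℝ ∞ Φ) (hΦc : HasCompactSupport Φ) (hΦ1 : Φ =ᶠ[𝓝 0] 1)
    (hΨ : Ψ = fun x => Φ (x / 2) - Φ x) :
    ∃ C : ℝ, ∀ (ℓ : ℕ) (x : Euc d), ‖invFTd (fun ξ => hfun χ Φ Ψ lam ℓ (ρ ξ)) x‖ ≤
      C * (2 : ℝ) ^ (-(ℓ : ℝ) * (lam + ((d : ℝ) + 1) / 2)) := by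
  have hΨsmooth : ContDiff ℝ ∞ fun s => (Ψ s : ℂ) := Complex.ofRealCLM.contDiff.comp
    (hΨ ▸ contDiff_half_sub hΦ)
  have hΨc : HasCompactSupport fun s => (Ψ s : ℂ) :=
    (hΨ ▸ hasCompactSupport_half_sub hΦc : HasCompactSupport Ψ).comp_left Complex.ofReal_zero
  have hΨ0 : 0 ∉ tsupport fun s => (Ψ s : ℂ) := fun h => zero_notMem_tsupport_half_sub hΦ1
    (hΨ ▸ tsupport_comp_subset Complex.ofReal_zero Ψ h)
  obtain ⟨C, hC⟩ :=
    exists_norm_invFTd_hfun_succ_le (Φ := Φ) hρ hcurv hlam hlam0 hχ hχc hχpos hΨsmooth hΨc hΨ0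
  set σ : ℝ := lam + ((d : ℝ) + 1) / 2
  refine ⟨max (((2 * Real.pi) ^ d)⁻¹ * ∫ ξ, ‖hfun χ Φ Ψ lam 0 (ρ ξ)‖) (C * 2 ^ σ), fun ℓ x => ?_⟩
  cases ℓ with
  | zero => simpa using le_max_of_le_left (norm_invFTd_le _ x)
  | succ k =>
    have hpow : ((2 : ℝ) ^ k) ^ (-σ) = 2 ^ σ * 2 ^ (-((k + 1 : ℕ) : ℝ) * σ) := by
      rw [← Real.rpow_natCast_mul two_pos.le, ← Real.rpow_add two_pos]
      push_cast
      ring_nf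
    calc _ ≤ C * ((2 : ℝ) ^ k) ^ (-σ) := hC k x
      _ = C * 2 ^ σ * 2 ^ (-((k + 1 : ℕ) : ℝ) * σ) := by rw [hpow, mul_assoc]
      _ ≤ _ := by
        gcongr
        exact le_max_right _ _

namespace HData

variable {N0 : ℕ}

lemma tsupport_χ_subset (hH : HData lam N0 χ Φ Ψ) : tsupport χ ⊆ Set.Icc (1 / 2) 2 :=
  closure_minimal (hH.hχsupp.trans Set.Ioo_subset_Icc_self) isClosed_Icc

lemma hasCompactSupport_χ (hH : HData lam N0 χ Φ Ψ) : HasCompactSupport χ :=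
  isCompact_Icc.of_isClosed_subset (isClosed_tsupport χ) hH.tsupport_χ_subset

lemma hasCompactSupport_Φ (hH : HData lam N0 χ Φ Ψ) : HasCompactSupport Φ :=
  HasCompactSupport.intro (isCompact_Icc (a := -1) (b := 1)) fun s hs =>
    hH.hΦzero s (not_lt.1 fun h => hs (abs_le.1 h.le))

lemma Φ_eventuallyEq_one (hH : HData lam N0 χ Φ Ψ) : Φ =ᶠ[𝓝 0] 1 := by
  filter_upwards [Metric.closedBall_mem_nhds (0 : ℝ) (one_half_pos (α := ℝ))] with s hs
  exact hH.hΦone s (by simpa using hs)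

end HData

end KernelBound

/-- The sup-norm bound `‖K_{λ,ℓ}‖_∞ ≲ 2^{-ℓ(λ + (d+1)/2)}` under the
curvature assumption. -/
theorem kernel_sup_norm_bound
    (d : ℕ) (hd : 2 ≤ d) (Ω : Set (Euc d)) (ρ : Euc d → ℝ)
    (hρ : IsMinkowskiGauge d Ω ρ) (hcurv : HasNonvanishingCurvature d ρ)
    (lam : ℝ) (hlam : 0 < lam) (N0 : ℕ) (hN0 : d < N0)
    (χ Φ Ψ : ℝ → ℝ) (hH : HData lam N0 χ Φ Ψ) :
    ∃ C : ℝ, ∀ (ℓ : ℕ) (x : Euc d),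
      ‖invFTd (fun ξ => hfun χ Φ Ψ lam ℓ (ρ ξ)) x‖ ≤
        C * (2:ℝ) ^ (-(ℓ : ℝ) * (lam + ((d : ℝ) + 1) / 2)) :=
  kernel_sup_norm_bound_general hρ hcurv (neg_one_lt_zero.trans hlam) hlam.ne' hH.hχsm
    hH.hasCompactSupport_χ (hH.tsupport_χ_subset.trans fun _ h => one_half_pos.trans_le h.1)
    hH.hΦsm hH.hasCompactSupport_Φ hH.Φ_eventuallyEq_one hH.hΨ
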